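/- arXiv:1904.00146 — 5 statements merged into one kernel-verified Lean document; each statement's English description precedes it below -/
import Mathlib

section
/- Fix integers ℓ > r ≥ 2. For every ε₁ > 0 there exist η₁ = η₁(r, ℓ, ε₁) > 0 and n₀ = n₀(r, ℓ, ε₁) such that any H_{K_ℓ}^(r)-free r-graph G of order n ≥ n₀ with at least t_r(n, ℓ−1) − η₁·n^r edges is ε₁-close to T_r(n, ℓ−1). -/
open Finset

/-- An `r`-graph: a set of edges each of which has exactly `r` vertices. -/
def IsRGraph {α : Type*} (r : ℕ) (G : Finset (Finset α)) : Prop :=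
  ∀ e ∈ G, e.card = r

/-- `G` contains a (not necessarily induced) copy of `H`, i.e. a subgraph isomorphic to `H`. -/
def ContainsCopy {α β : Type*} [DecidableEq β]
    (H : Finset (Finset α)) (G : Finset (Finset β)) : Prop :=
  ∃ f : α → β, Function.Injective f ∧ ∀ e ∈ H, e.image f ∈ G

/-- There is a homomorphism from `H` to `G`. -/
def ContainsHom {α β : Type*} [DecidableEq β]
    (H : Finset (Finset α)) (G : Finset (Finset β)) : Prop :=
  ∃ f : α → β, ∀ e ∈ H, e.image f ∈ G

/-- The Turán number `ex(n, H)` for `r`-graphs: the maximum number of edges in an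
`n`-vertex `H`-free `r`-graph. -/
noncomputable def exNum {α : Type*} (r n : ℕ) (H : Finset (Finset α)) : ℕ :=
  sSup {m | ∃ G : Finset (Finset (Fin n)), IsRGraph r G ∧ ¬ ContainsCopy H G ∧ G.card = m}

/-- The two endpoints of an edge of a simple graph, as a `Finset`. -/
def sym2ToFinset {α : Type*} [Fintype α] [DecidableEq α] (e : Sym2 α) : Finset α :=
  Finset.univ.filter (· ∈ e)

/-- The expansion `H_F^(r)` of a 2-graph `F`: each edge of `F` is enlarged with a new set of
`r - 2` vertices, distinct edges getting disjoint sets of new vertices. -/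
def expansion {α : Type*} [Fintype α] [DecidableEq α] (r : ℕ)
    (F : SimpleGraph α) [DecidableRel F.Adj] :
    Finset (Finset (α ⊕ (F.edgeFinset × Fin (r - 2)))) :=
  F.edgeFinset.attach.image (fun e =>
    (sym2ToFinset e.1).image Sum.inl ∪
      (Finset.univ : Finset (Fin (r - 2))).image (fun i => Sum.inr (e, i)))

/-- The complete balanced `l`-partite `r`-graph `T_r(n, l)` on vertex set `Fin n`,
with vertex classes the residue classes modulo `l` (which differ in size by at most 1):
its edges are all `r`-sets meeting each class in at most one vertex. -/
def turanGraph (r n l : ℕ) : Finset (Finset (Fin n)) :=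
  (Finset.univ.powersetCard r).filter
    (fun e => ∀ u ∈ e, ∀ v ∈ e, (u : ℕ) % l = (v : ℕ) % l → u = v)

/-- `t_r(n, l)`, the number of edges of `T_r(n, l)`. -/
def turanNum (r n l : ℕ) : ℕ := (turanGraph r n l).card

/-- Two `r`-graphs on `Fin n` are `ε`-close if some relabelling of the first one has
symmetric difference at most `ε·C(n,r)` with the second one. -/
def EpsClose (r n : ℕ) (ε : ℝ) (G₁ G₂ : Finset (Finset (Fin n))) : Prop :=
  ∃ σ : Fin n ≃ Fin n,
    ((((G₁.image fun e => e.image σ) \ G₂) ∪ (G₂ \ (G₁.image fun e => e.image σ))).card : ℝ)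
      ≤ ε * (n.choose r)

/-- `G` contains a member of the decomposition family `𝓕_F` (w.r.t. proper `ℓ`-colourings of
`F`) as a subgraph, with all its vertices placed inside `S`.  A member of `𝓕_F` is obtained
from `F` by deleting the vertices of `ℓ - 2` colour classes of a proper `ℓ`-colouring of `F`. -/
def ContainsDecompMemberOn {α β : Type*} [DecidableEq β] (ℓ : ℕ) (F : SimpleGraph α)
    (G : Finset (Finset β)) (S : Set β) : Prop :=
  ∃ c : α → Fin ℓ, (∀ ⦃u v⦄, F.Adj u v → c u ≠ c v) ∧
    ∃ i j : Fin ℓ, i ≠ j ∧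
      ∃ f : {v : α // c v = i ∨ c v = j} → β, Function.Injective f ∧
        (∀ v, f v ∈ S) ∧
        ∀ u v : {v : α // c v = i ∨ c v = j}, F.Adj u.1 v.1 → ({f u, f v} : Finset β) ∈ G

/-- `biex(n, F) = ex(n, 𝓕_F)`: the maximum number of edges in an `n`-vertex 2-graph containing
no member of the decomposition family of `F` (w.r.t. proper `ℓ`-colourings) as a subgraph. -/
noncomputable def biex {α : Type*} (ℓ : ℕ) (F : SimpleGraph α) (n : ℕ) : ℕ :=
  sSup {m | ∃ G : Finset (Finset (Fin n)), IsRGraph 2 G ∧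
    ¬ ContainsDecompMemberOn ℓ F G Set.univ ∧ G.card = m}

/-- The Lagrangian of an `r`-graph `G`:
`λ(G) = max { Σ_{e ∈ G} Π_{i ∈ e} w i }` over all legal weightings `w`. -/
noncomputable def lagrangian {α : Type*} [Fintype α] (G : Finset (Finset α)) : ℝ :=
  sSup {x : ℝ | ∃ w : α → ℝ, (∀ i, 0 ≤ w i) ∧ (∑ i, w i) = 1 ∧
    x = ∑ e ∈ G, ∏ i ∈ e, w i}


namespace StabAux

section MM
open scoped Classical
variable {V : Type*} [Fintype V]

noncomputable def extN (P : SimpleGraph V) (A : Finset V) : Finset V :=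
  univ.filter (fun v => ∀ a ∈ A, P.Adj a v)

lemma not_mem_of_ext {P : SimpleGraph V} {A : Finset V} {v : V} (h : v ∈ extN P A) : v ∉ A := by
  intro hv
  have := (mem_filter.1 h).2 v hv
  exact P.loopless.irrefl v this

lemma dc (P : SimpleGraph V) (s : ℕ) (g : Finset V → ℝ) :
    ∑ A ∈ P.cliqueFinset (s+1), ∑ a ∈ A, g (A.erase a)
      = ∑ B ∈ P.cliqueFinset s, ((extN P B).card : ℝ) * g B := by
  have h2 : ∀ B ∈ P.cliqueFinset s, ((extN P B).card : ℝ) * g B = ∑ v ∈ extN P B, g B := by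
    intro B _; simp
  rw [Finset.sum_congr rfl h2, Finset.sum_sigma', Finset.sum_sigma']
  refine Finset.sum_bij' (fun x _ => ⟨x.1.erase x.2, x.2⟩) (fun x _ => ⟨insert x.2 x.1, x.2⟩)
    ?_ ?_ ?_ ?_ ?_
  · rintro ⟨A, a⟩ h
    simp only [mem_sigma, SimpleGraph.mem_cliqueFinset_iff, SimpleGraph.isNClique_iff] at h ⊢
    obtain ⟨⟨h1, h2⟩, h3⟩ := h
    refine ⟨⟨h1.subset (by simp), by rw [card_erase_of_mem h3]; omega⟩, ?_⟩
    simp only [extN, mem_filter, mem_univ, true_and, mem_erase]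
    rintro b ⟨hb, hb'⟩
    exact h1 (by simpa using hb') (by simpa using h3) hb
  · rintro ⟨B, v⟩ h
    simp only [mem_sigma, SimpleGraph.mem_cliqueFinset_iff, SimpleGraph.isNClique_iff] at h ⊢
    obtain ⟨⟨h1, h2⟩, h3⟩ := h
    refine ⟨⟨?_, by rw [card_insert_of_notMem (not_mem_of_ext h3), h2]⟩, by simp⟩
    rw [Finset.coe_insert, SimpleGraph.isClique_insert]
    exact ⟨h1, fun b hb _ => ((mem_filter.1 h3).2 b (by simpa using hb)).symm⟩
  · rintro ⟨A, a⟩ h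
    simp only [mem_sigma] at h
    simp [insert_erase h.2]
  · rintro ⟨B, v⟩ h
    simp only [mem_sigma] at h
    simp [erase_insert (not_mem_of_ext h.2)]
  · rintro ⟨A, a⟩ h
    rfl

lemma dc1 (P : SimpleGraph V) (s : ℕ) :
    ((s:ℝ)+1) * (P.cliqueFinset (s+1)).card = ∑ B ∈ P.cliqueFinset s, ((extN P B).card : ℝ) := by
  have := dc P s (fun _ => 1)
  simp only [sum_const, nsmul_eq_mul, mul_one] at this
  rw [← this, Finset.sum_congr rfl (g := fun _ => ((s:ℝ)+1))]
  · rw [sum_const, nsmul_eq_mul, mul_comm]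
  · intro A hA
    rw [SimpleGraph.mem_cliqueFinset_iff] at hA
    rw [hA.2]; push_cast; rfl

lemma inner_le (P : SimpleGraph V) (s : ℕ) (A : Finset V) (hA : A.card = s+1) :
    ∑ a ∈ A, ((extN P (A.erase a)).card : ℝ) ≤ Fintype.card V + s * (extN P A).card := by
  have h1 : ∀ v : V, ∑ a ∈ A, (if v ∈ extN P (A.erase a) then (1:ℝ) else 0)
      ≤ 1 + s * (if v ∈ extN P A then 1 else 0) := by
    intro v
    split_ifs with hv
    · calc _ ≤ ∑ a ∈ A, (1:ℝ) := Finset.sum_le_sum (fun a _ => by split_ifs <;> simp)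
        _ = _ := by simp [hA]; ring
    · simp only [mul_zero, add_zero]
      have : ∃ b ∈ A, ¬ P.Adj b v := by
        by_contra hcon
        push Not at hcon
        exact hv (by simp [extN]; exact hcon)
      obtain ⟨b, hb, hbv⟩ := this
      calc _ ≤ ∑ a ∈ A, (if a = b then (1:ℝ) else 0) := by
            apply Finset.sum_le_sum
            intro a ha
            split_ifs with h1 h2 h2 <;> try norm_num
            have := (mem_filter.1 h1).2 b (mem_erase.2 ⟨fun h => h2 h.symm, hb⟩)
            exact hbv this
        _ ≤ 1 := by simp [hb]
  have h2 : ∀ B : Finset V, ((extN P B).card : ℝ) = ∑ v, if v ∈ extN P B then (1:ℝ) else 0 := by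
    intro B; simp
  rw [Finset.sum_congr rfl (fun a _ => h2 (A.erase a)), Finset.sum_comm]
  refine (Finset.sum_le_sum (fun v _ => h1 v)).trans ?_
  rw [Finset.sum_add_distrib, ← Finset.mul_sum, ← h2]
  simp

lemma moonMoser (P : SimpleGraph V) (s : ℕ) :
    (((s:ℝ)+1) * (P.cliqueFinset (s+1)).card)^2 ≤ (P.cliqueFinset s).card *
      (Fintype.card V * (P.cliqueFinset (s+1)).card
        + s * ((s+2) * (P.cliqueFinset (s+2)).card)) := by
  rw [dc1]
  refine (sq_sum_le_card_mul_sum_sq).trans ?_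
  gcongr
  have := dc P s (fun B => ((extN P B).card : ℝ))
  simp only [sq]
  rw [← this]
  have h3 := dc1 P (s+1)
  have h4 : ((s:ℝ)+2) * (P.cliqueFinset (s+2)).card
    = ∑ B ∈ P.cliqueFinset (s+1), ((extN P B).card : ℝ) := by
    rw [← h3]; push_cast; ring
  rw [h4, Finset.mul_sum]
  refine (Finset.sum_le_sum (fun A hA => inner_le P s A
    ((P.mem_cliqueFinset_iff).1 hA).2)).trans ?_
  rw [Finset.sum_add_distrib]
  simp [mul_comm]

lemma ratio (P : SimpleGraph V) (k : ℕ) (hk : 0 < k) (hP : P.CliqueFree (k+1)) (j s : ℕ)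
    (hs : s + j = k) :
    ((s:ℝ)+1) * k * (P.cliqueFinset (s+1)).card
      ≤ j * Fintype.card V * (P.cliqueFinset s).card := by
  induction j generalizing s with
  | zero =>
    have : s = k := by omega
    subst this
    rw [(SimpleGraph.cliqueFinset_eq_empty_iff).2 hP]
    simp
  | succ j ih =>
    have h1 := ih (s+1) (by omega)
    have h2 := moonMoser P s
    push_cast at h1
    set a := ((P.cliqueFinset s).card : ℝ)
    set b := ((P.cliqueFinset (s+1)).card : ℝ) with hb
    set c := ((P.cliqueFinset (s+2)).card : ℝ)
    set n := (Fintype.card V : ℝ)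
    have ha0 : 0 ≤ a := by positivity
    have hb0 : 0 ≤ b := by positivity
    have hn0 : 0 ≤ n := by positivity
    have hkk : (k:ℝ) = s + (j+1) := by rw [← hs]; push_cast; ring
    have hk0 : (0:ℝ) < k := by exact_mod_cast hk
    rcases hb0.eq_or_lt with h | h
    · rw [← h]; push_cast; simp only [mul_zero]; positivity
    · have h1' : (s + 2) * c * k ≤ j * n * b := by
        linarith
      have e1 : k * (((s:ℝ)+1) * b)^2 ≤ a * (n * b * k + s * (j * n * b)) := by
        calc k * (((s:ℝ)+1) * b)^2 ≤ k * (a * (n * b + s * ((s+2) * c))) := by gcongr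
          _ = a * (n * b * k + s * ((s+2) * c * k)) := by ring
          _ ≤ _ := by gcongr
      have e2 : (s+1) * b * (((s:ℝ)+1) * k * b) ≤ (s+1) * b * (((j+1:ℕ):ℝ) * n * a) := by
        push_cast
        calc _ = k * (((s:ℝ)+1) * b)^2 := by ring
          _ ≤ _ := e1
          _ = _ := by rw [hkk]; ring
      exact le_of_mul_le_mul_left e2 (by positivity)

lemma chain (P : SimpleGraph V) (k : ℕ) (hP : P.CliqueFree (k+1)) (s : ℕ)
    (hs2 : 2 ≤ s) (hs : s ≤ k) :
    ((P.cliqueFinset s).card : ℝ) * k ^ s * k.choose 2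
      ≤ k.choose s * (Fintype.card V : ℝ)^(s-2) * k^2 * (P.cliqueFinset 2).card := by
  induction s, hs2 using Nat.le_induction with
  | base => simp; apply le_of_eq; ring
  | succ s hs2 ih =>
    have h1 := ih (by omega)
    obtain ⟨j, hj⟩ : ∃ j, k = s + j := ⟨k - s, by omega⟩
    have h2 := ratio P k (by omega) hP j s hj.symm
    have h3 : (k.choose (s+1) : ℝ) * (s+1) = k.choose s * j := by
      have := Nat.choose_succ_right_eq k s
      have hh : k - s = j := by omega
      rw [hh] at this
      exact_mod_cast this
    have hpow : (Fintype.card V : ℝ)^(s+1-2) = (Fintype.card V : ℝ)^(s-2) * Fintype.card V := by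
      rw [← pow_succ]; congr 1; omega
    rw [hpow]
    have hs0 : (0:ℝ) < s+1 := by positivity
    refine le_of_mul_le_mul_left ?_ hs0
    calc ((s:ℝ)+1) * ((P.cliqueFinset (s+1)).card * k^(s+1) * k.choose 2)
        = (((s:ℝ)+1) * k * (P.cliqueFinset (s+1)).card) * k^s * k.choose 2 := by ring
      _ ≤ (j * Fintype.card V * (P.cliqueFinset s).card) * k^s * k.choose 2 := by gcongr
      _ = (j * Fintype.card V) * ((P.cliqueFinset s).card * k^s * k.choose 2) := by ring
      _ ≤ (j * Fintype.card V) * _ := mul_le_mul_of_nonneg_left h1 (by positivity)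
      _ = (k.choose s * j) * ((Fintype.card V : ℝ)^(s-2) * Fintype.card V * k^2
            * (P.cliqueFinset 2).card) := by ring
      _ = _ := by rw [← h3]; ring

end MM
end StabAux

namespace StabAux

section Fur
open scoped Classical
variable {V : Type*} [Fintype V]

noncomputable def cnt (S T : Finset V) (R : V → V → Prop) : ℕ :=
  ∑ x ∈ S, ∑ y ∈ T, if R x y then 1 else 0


lemma cnt_union (S T : Finset V) (h : Disjoint S T) (R : V → V → Prop)
    (hR : ∀ x y, R x y → R y x) :
    cnt (S ∪ T) (S ∪ T) R = cnt S S R + 2 * cnt T S R + cnt T T R := by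
  have hsym : cnt S T R = cnt T S R := by
    unfold cnt
    rw [Finset.sum_comm]
    refine Finset.sum_congr rfl fun x _ => Finset.sum_congr rfl fun y _ => ?_
    exact if_congr ⟨hR _ _, hR _ _⟩ rfl rfl
  have : cnt (S ∪ T) (S ∪ T) R = cnt S S R + cnt S T R + (cnt T S R + cnt T T R) := by
    unfold cnt
    rw [Finset.sum_union h]
    simp only [Finset.sum_union h, Finset.sum_add_distrib]
  rw [this, hsym]; ring

lemma cnt_congr (S T : Finset V) (R R' : V → V → Prop)
    (h : ∀ x ∈ S, ∀ y ∈ T, (R x y ↔ R' x y)) : cnt S T R = cnt S T R' := by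
  unfold cnt
  refine Finset.sum_congr rfl fun x hx => Finset.sum_congr rfl fun y hy => ?_
  exact if_congr (h x hx y hy) rfl rfl

lemma furedi (P : SimpleGraph V) (k : ℕ) (S : Finset V)
    (hS : P.CliqueFreeOn (S : Set V) (k+1)) :
    ∃ c : V → ℕ, (∀ x ∈ S, c x < k) ∧
      cnt S S P.Adj + cnt S S (fun x y => P.Adj x y ∧ c x = c y)
        ≤ cnt S S (fun x y => c x ≠ c y) := by
  induction k generalizing S with
  | zero =>
    have : S = ∅ := by
      by_contra hne
      obtain ⟨x, hx⟩ := Finset.nonempty_iff_ne_empty.2 hne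
      exact hS (t := {x}) (by simpa using hx) (by simp [SimpleGraph.isNClique_iff])
    subst this
    exact ⟨fun _ => 0, by simp, by simp [cnt]⟩
  | succ k ih =>
    rcases S.eq_empty_or_nonempty with rfl | hne
    · exact ⟨fun _ => 0, by simp, by simp [cnt]⟩
    obtain ⟨x, hx, hmax⟩ := S.exists_max_image (fun x => (S.filter (P.Adj x)).card) hne
    set N := S.filter (P.Adj x) with hN
    set W := S.filter (fun y => ¬ P.Adj x y) with hW
    have hdis : Disjoint N W := Finset.disjoint_filter_filter_not _ _ _
    have hun : N ∪ W = S := Finset.filter_union_filter_not_eq _ _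
    have hNf : P.CliqueFreeOn (N : Set V) (k+1) := by
      intro t ht hc
      have hxt : ∀ b ∈ t, P.Adj x b := fun b hb =>
        (mem_filter.1 (show b ∈ N by simpa using ht (by simpa using hb))).2
      refine hS (t := insert x t) ?_ (hc.insert hxt)
      intro y hy
      rw [Finset.coe_insert] at hy
      rcases hy with rfl | hy
      · simpa using hx
      · have := (mem_filter.1 (show y ∈ N by simpa using ht hy)).1
        simpa using this
    obtain ⟨c, hc, hle⟩ := ih N hNf
    let c' : V → ℕ := fun y => if y ∈ N then c y else k
    have hcN : ∀ y ∈ N, c' y = c y := fun y hy => by simp [c', hy]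
    have hcW : ∀ y ∈ W, c' y = k := fun y hy => by
      have : y ∉ N := fun h => Finset.disjoint_left.1 hdis h hy
      simp [c', this]
    refine ⟨c', ?_, ?_⟩
    · intro y hy
      rw [← hun] at hy
      rcases mem_union.1 hy with h | h
      · rw [hcN y h]; have := hc y h; omega
      · rw [hcW y h]; omega
    have d1 := cnt_union N W hdis P.Adj (fun _ _ h => h.symm)
    have d2 := cnt_union N W hdis (fun x y => P.Adj x y ∧ c' x = c' y)
      (fun _ _ h => ⟨h.1.symm, h.2.symm⟩)
    have d3 := cnt_union N W hdis (fun x y => c' x ≠ c' y) (fun _ _ h => h.symm)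
    rw [hun] at d1 d2 d3
    have e1 : cnt N N (fun x y => P.Adj x y ∧ c' x = c' y)
        = cnt N N (fun x y => P.Adj x y ∧ c x = c y) :=
      cnt_congr _ _ _ _ fun x hx y hy => by rw [hcN x hx, hcN y hy]
    have e2 : cnt N N (fun x y => c' x ≠ c' y) = cnt N N (fun x y => c x ≠ c y) :=
      cnt_congr _ _ _ _ fun x hx y hy => by rw [hcN x hx, hcN y hy]
    have e3 : cnt W N (fun x y => P.Adj x y ∧ c' x = c' y) = 0 := by
      rw [cnt_congr W N _ (fun _ _ => False)]
      · simp [cnt]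
      · intro x hx y hy
        rw [hcN y hy, hcW x hx]
        have := hc y hy
        simp; intro _; omega
    have e4 : cnt W W (fun x y => P.Adj x y ∧ c' x = c' y) = cnt W W P.Adj :=
      cnt_congr _ _ _ _ fun x hx y hy => by rw [hcW x hx, hcW y hy]; simp
    have e5 : cnt W N (fun x y => c' x ≠ c' y) = W.card * N.card := by
      rw [cnt_congr W N _ (fun _ _ => True)]
      · simp [cnt]
      · intro x hx y hy
        rw [hcN y hy, hcW x hx]
        have := hc y hy
        simp; omega
    have e6 : cnt W N P.Adj + cnt W W P.Adj ≤ W.card * N.card := by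
      have : cnt W N P.Adj + cnt W W P.Adj = ∑ w ∈ W, (S.filter (P.Adj w)).card := by
        unfold cnt
        rw [← Finset.sum_add_distrib]
        refine Finset.sum_congr rfl fun w _ => ?_
        rw [← Finset.sum_union hdis, hun, Finset.card_filter]
      rw [this]
      refine (Finset.sum_le_card_nsmul W _ N.card ?_).trans (by simp)
      intro w hw
      exact hmax w (mem_filter.1 hw).1
    rw [d1, d2, d3, e1, e2, e3, e4, e5]
    omega

end Fur

section Al
open scoped Classical

lemma align {V : Type*} [Fintype V] (k t : ℕ) (c d : V → ℕ) (hc : ∀ v, c v < k)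
    (h : ∀ i < k, (univ.filter (fun v => c v = i)).card ≤ (univ.filter (fun v => d v = i)).card + t) :
    ∃ σ : V ≃ V, (univ.filter (fun v => d (σ v) ≠ c v)).card ≤ k * t := by
  obtain ⟨σ, -, hmax⟩ := (univ : Finset (V ≃ V)).exists_min_image
    (fun σ => (univ.filter (fun v => d (σ v) ≠ c v)).card) ⟨Equiv.refl V, mem_univ _⟩
  refine ⟨σ, ?_⟩
  have key : ∀ i < k, (univ.filter (fun v => d (σ v) ≠ c v ∧ c v = i)).card ≤ t := by
    intro i hi
    by_contra hcon
    push Not at hcon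
    have hb : ∀ w, d (σ w) = i → c w = i := by
      intro w hw
      by_contra hcw
      obtain ⟨v, hv⟩ : (univ.filter (fun v => d (σ v) ≠ c v ∧ c v = i)).Nonempty := by
        rw [← Finset.card_pos]; omega
      simp only [mem_filter, mem_univ, true_and] at hv
      obtain ⟨hv1, hv2⟩ := hv
      have hvw : v ≠ w := fun h => hcw (h ▸ hv2)
      have := hmax ((Equiv.swap v w).trans σ) (mem_univ _)
      have hlt : (univ.filter (fun u => d (((Equiv.swap v w).trans σ) u) ≠ c u)).card
          < (univ.filter (fun u => d (σ u) ≠ c u)).card := by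
        apply Finset.card_lt_card
        rw [Finset.ssubset_iff_of_subset]
        · refine ⟨v, by simpa using hv1, ?_⟩
          rw [mem_filter]
          simp [hw, hv2]
        · intro u hu
          rw [mem_filter] at hu ⊢
          simp only [mem_univ, true_and, Equiv.trans_apply] at hu ⊢
          by_cases h1 : u = v
          · subst h1; exact hv1
          by_cases h2 : u = w
          · subst h2; rw [hw]; exact fun h => hcw h.symm
          rwa [Equiv.swap_apply_of_ne_of_ne h1 h2] at hu
      omega
    have h1 : (univ.filter (fun v => d v = i)).card
        = (univ.filter (fun v => d (σ v) = c v ∧ c v = i)).card := by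
      rw [← Finset.card_map σ.symm.toEmbedding]
      congr 1
      ext v
      simp only [mem_map, mem_filter, mem_univ, true_and, Equiv.coe_toEmbedding]
      constructor
      · rintro ⟨a, ha, rfl⟩
        have := hb (σ.symm a) (by simpa using ha)
        simp [ha, this]
      · rintro ⟨h1, h2⟩
        exact ⟨σ v, by rw [h1, h2], by simp⟩
    have h2 : (univ.filter (fun v => c v = i)).card
      = (univ.filter (fun v => d (σ v) = c v ∧ c v = i)).card
        + (univ.filter (fun v => d (σ v) ≠ c v ∧ c v = i)).card := by
      rw [← Finset.card_union_of_disjoint]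
      · congr 1; ext v; simp; tauto
      · rw [Finset.disjoint_filter]; tauto
    have := h i hi
    omega
  have hsub : (univ.filter (fun v => d (σ v) ≠ c v))
      ⊆ (range k).biUnion (fun i => univ.filter (fun v => d (σ v) ≠ c v ∧ c v = i)) := by
    intro v hv
    simp only [mem_filter, mem_univ, true_and, mem_biUnion, mem_range] at hv ⊢
    exact ⟨c v, hc v, hv, rfl⟩
  refine (Finset.card_le_card hsub).trans (Finset.card_biUnion_le.trans ?_)
  refine (Finset.sum_le_card_nsmul _ _ t (fun i hi => key i (mem_range.1 hi))).trans (by simp)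

end Al
end StabAux
namespace StabAux

def heavy {V : Type*} [DecidableEq V] (G : Finset (Finset V)) (M : ℕ) : SimpleGraph V where
  Adj u v := u ≠ v ∧ ∀ W : Finset V, W.card ≤ M → u ∉ W → v ∉ W →
    ∃ e ∈ G, u ∈ e ∧ v ∈ e ∧ Disjoint e W
  symm := ⟨by
    rintro u v ⟨h, h'⟩
    refine ⟨h.symm, fun W hW hv hu => ?_⟩
    obtain ⟨e, he, h1, h2, h3⟩ := h' W hW hu hv
    exact ⟨e, he, h2, h1, h3⟩⟩
  loopless := ⟨fun u h => h.1 rfl⟩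

lemma sym2ToFinset_mk {α : Type*} [Fintype α] [DecidableEq α] (i j : α) :
    sym2ToFinset s(i, j) = {i, j} := by
  ext x; simp [sym2ToFinset]

lemma greedy {V : Type*} [DecidableEq V] {r l : ℕ} (G : Finset (Finset V)) (hG : IsRGraph r G)
    (f : Fin l → V) (M : ℕ) (hM : l + Fintype.card (Sym2 (Fin l)) * r ≤ M)
    (hf : ∀ i j, i ≠ j → (heavy G M).Adj (f i) (f j))
    (A : Finset (Sym2 (Fin l))) (hA : ∀ a ∈ A, ¬ a.IsDiag) :
    ∃ E : Sym2 (Fin l) → Finset V, (∀ a ∈ A, E a ∈ G ∧ (sym2ToFinset a).image f ⊆ E a ∧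
      Disjoint (E a) (univ.image f \ (sym2ToFinset a).image f)) ∧
      ∀ a ∈ A, ∀ b ∈ A, a ≠ b →
        Disjoint (E a \ (sym2ToFinset a).image f) (E b \ (sym2ToFinset b).image f) := by
  induction A using Finset.induction_on with
  | empty => exact ⟨fun _ => ∅, by simp, by simp⟩
  | insert a A ha ih =>
    obtain ⟨E, hE1, hE2⟩ := ih (fun b hb => hA b (mem_insert_of_mem hb))
    have hnd := hA a (mem_insert_self _ _)
    obtain ⟨e, heG, hsub, hdis⟩ : ∃ e ∈ G, (sym2ToFinset a).image f ⊆ e ∧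
        Disjoint e ((univ.image f ∪ A.biUnion E) \ (sym2ToFinset a).image f) := by
      induction a with
      | h i j =>
        have hij : i ≠ j := by simpa using hnd
        obtain ⟨e, he, h1, h2, h3⟩ := (hf i j hij).2
          ((univ.image f ∪ A.biUnion E) \ (sym2ToFinset s(i,j)).image f) (by
            refine (card_le_card sdiff_subset).trans ((card_union_le _ _).trans
              (le_trans ?_ hM))
            apply add_le_add
            · exact card_image_le.trans (by simp)
            · refine (card_biUnion_le).trans ((sum_le_card_nsmul _ _ r ?_).trans ?_)
              · intro b hb
                exact (hG _ (hE1 b hb).1).le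
              · simp only [smul_eq_mul]
                exact Nat.mul_le_mul_right _ (card_le_univ _))
          (by simp [sym2ToFinset_mk]) (by simp [sym2ToFinset_mk])
        refine ⟨e, he, ?_, h3⟩
        simp [sym2ToFinset_mk, image_insert, insert_subset_iff, h1, h2]
    have hne : ∀ b ∈ A, b ≠ a := fun b hb h => ha (h ▸ hb)
    have hup : ∀ b ∈ A, Function.update E a e b = E b := fun b hb =>
      Function.update_of_ne (hne b hb) _ _
    have key : ∀ b ∈ A, Disjoint (e \ (sym2ToFinset a).image f)
        (E b \ (sym2ToFinset b).image f) := by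
      intro b hb
      rw [Finset.disjoint_left]
      intro x hx hx'
      rw [mem_sdiff] at hx hx'
      exact Finset.disjoint_left.1 hdis hx.1 (mem_sdiff.2 ⟨mem_union_right _
        (mem_biUnion.2 ⟨b, hb, hx'.1⟩), hx.2⟩)
    refine ⟨Function.update E a e, ?_, ?_⟩
    · intro b hb
      rcases mem_insert.1 hb with rfl | hb
      · rw [Function.update_self]
        exact ⟨heG, hsub, hdis.mono_right (sdiff_subset_sdiff subset_union_left le_rfl)⟩
      · rw [hup b hb]; exact hE1 b hb
    · intro b hb b' hb' hbb
      rcases mem_insert.1 hb with hba | hbA <;> rcases mem_insert.1 hb' with hba' | hbA'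
      · exact absurd (hba.trans hba'.symm) hbb
      · rw [hba, Function.update_self, hup b' hbA']; exact key b' hbA'
      · rw [hba', Function.update_self, hup b hbA]; exact (key b hbA).symm
      · rw [hup b hbA, hup b' hbA']; exact hE2 b hbA b' hbA' hbb

lemma heavy_cliqueFree {V : Type*} [DecidableEq V] {r l : ℕ}
    (G : Finset (Finset V)) (hG : IsRGraph r G)
    (M : ℕ) (hM : l + Fintype.card (Sym2 (Fin l)) * r ≤ M)
    (hcopy : ¬ ContainsCopy (expansion r (⊤ : SimpleGraph (Fin l))) G) :
    (heavy G M).CliqueFree l := by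
  by_contra hcf
  let φ := SimpleGraph.topEmbeddingOfNotCliqueFree hcf
  let f : Fin l → V := φ
  have hfinj : Function.Injective f := φ.injective
  have hf : ∀ i j, i ≠ j → (heavy G M).Adj (f i) (f j) := fun i j hij => by
    have := φ.map_rel_iff (a := i) (b := j)
    exact this.2 (by simpa using hij)
  obtain ⟨E, hE1, hE2⟩ := greedy G hG f M hM hf (⊤ : SimpleGraph (Fin l)).edgeFinset
    (fun a ha => SimpleGraph.not_isDiag_of_mem_edgeSet _ (SimpleGraph.mem_edgeFinset.1 ha))
  have hcard : ∀ a : (⊤ : SimpleGraph (Fin l)).edgeFinset,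
      (E a.1 \ (sym2ToFinset a.1).image f).card = r - 2 := by
    rintro ⟨a, ha⟩
    rw [card_sdiff_of_subset (hE1 a ha).2.1, hG _ (hE1 a ha).1, card_image_of_injective _ hfinj]
    congr 1
    have hnd := SimpleGraph.not_isDiag_of_mem_edgeSet _ (SimpleGraph.mem_edgeFinset.1 ha)
    clear ha
    induction a with
    | h i j => rw [sym2ToFinset_mk, card_pair (by simpa using hnd)]
  let g : ∀ a : (⊤ : SimpleGraph (Fin l)).edgeFinset,
      (E a.1 \ (sym2ToFinset a.1).image f : Finset V) ≃ Fin (r-2) :=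
    fun a => Finset.equivFinOfCardEq (hcard a)
  have hgm : ∀ a j, ((g a).symm j : V) ∈ E a.1 \ (sym2ToFinset a.1).image f :=
    fun a j => ((g a).symm j).2
  have hgf : ∀ a j i, ((g a).symm j : V) ≠ f i := by
    intro a j i h
    have h1 := mem_sdiff.1 (hgm a j)
    refine Finset.disjoint_left.1 (hE1 a.1 a.2).2.2 h1.1 (mem_sdiff.2 ⟨?_, h1.2⟩)
    rw [h]; exact mem_image_of_mem _ (mem_univ _)
  apply hcopy
  refine ⟨Sum.elim f (fun p => ((g p.1).symm p.2 : V)), ?_, ?_⟩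
  · apply Function.Injective.sumElim hfinj
    · rintro ⟨a, i⟩ ⟨b, j⟩ h
      simp only at h
      by_cases hab : a = b
      · subst hab
        have : i = j := (g a).symm.injective (Subtype.ext h)
        rw [this]
      · exfalso
        have := hE2 a.1 a.2 b.1 b.2 (fun h => hab (Subtype.ext h))
        refine Finset.disjoint_left.1 this (hgm a i) ?_
        rw [h]; exact hgm b j
    · intro i p h
      exact hgf _ _ _ h.symm
  · intro e he
    simp only [expansion, mem_image, mem_attach, true_and] at he
    obtain ⟨a, rfl⟩ := he
    convert (hE1 a.1 a.2).1 using 1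
    rw [image_union, image_image, image_image]
    ext x
    simp only [mem_union, mem_image, Function.comp, Sum.elim_inl, Sum.elim_inr, mem_univ, true_and]
    constructor
    · rintro (⟨i, hi, rfl⟩ | ⟨j, rfl⟩)
      · exact (hE1 a.1 a.2).2.1 (mem_image_of_mem _ hi)
      · exact (mem_sdiff.1 (hgm a j)).1
    · intro hx
      by_cases hx' : x ∈ (sym2ToFinset a.1).image f
      · left; simpa using hx'
      · right
        exact ⟨g a ⟨x, mem_sdiff.2 ⟨hx, hx'⟩⟩, by simp⟩

lemma card_sup {n r : ℕ} (G : Finset (Finset (Fin n))) (hG : IsRGraph r G) (S : Finset (Fin n)) :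
    (G.filter (fun e => S ⊆ e)).card ≤ n ^ (r - S.card) := by
  calc _ ≤ (powersetCard (r - S.card) (univ : Finset (Fin n))).card := by
        refine Finset.card_le_card_of_injOn (fun e => e \ S) ?_ ?_
        · intro e he
          have he := mem_filter.1 he
          exact mem_powersetCard.2 ⟨subset_univ _,
            by rw [card_sdiff_of_subset he.2, hG e he.1]⟩
        · intro e he e' he' h
          have he := mem_filter.1 he
          have he' := mem_filter.1 he'
          simp only at h
          rw [← sdiff_union_of_subset he.2, h, sdiff_union_of_subset he'.2]
    _ = n.choose (r - S.card) := by simp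
    _ ≤ _ := Nat.choose_le_pow _ _

lemma light_card {n r : ℕ} (G : Finset (Finset (Fin n))) (hG : IsRGraph r G) (M : ℕ)
    (L : Finset (Finset (Fin n))) (hLG : L ⊆ G)
    (hL : ∀ e ∈ L, ∃ u ∈ e, ∃ v ∈ e, u ≠ v ∧ ¬ (heavy G M).Adj u v) :
    L.card ≤ M * n ^ (r-1) := by
  classical
  have hW : ∀ p : Fin n × Fin n, ∃ W : Finset (Fin n), W.card ≤ M ∧ p.1 ∉ W ∧ p.2 ∉ W ∧
      (p.1 = p.2 → W = ∅) ∧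
      (p.1 ≠ p.2 → ¬ (heavy G M).Adj p.1 p.2 →
        ∀ e ∈ G, p.1 ∈ e → p.2 ∈ e → ∃ w ∈ W, w ∈ e) := by
    intro p
    by_cases h : p.1 ≠ p.2 ∧ ¬ (heavy G M).Adj p.1 p.2
    · have h2 := h.2
      simp only [heavy, not_and] at h2
      have h3 := h2 h.1
      push Not at h3
      obtain ⟨W, h4, h5, h6, h7⟩ := h3
      refine ⟨W, h4, h5, h6, fun h' => absurd h' h.1, fun _ _ e he h8 h9 => ?_⟩
      have := h7 e he h8 h9
      rw [Finset.not_disjoint_iff] at this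
      obtain ⟨w, hw, hw'⟩ := this
      exact ⟨w, hw', hw⟩
    · refine ⟨∅, by simp, by simp, by simp, fun _ => rfl, fun h1 h2 => absurd ⟨h1, h2⟩ h⟩
  choose W h1 h2 h3 h3' h4 using hW
  have hcov : ∀ e ∈ L, ∃ p : Fin n × Fin n, p.1 ≠ p.2 ∧ ∃ w ∈ W p, ({p.1, p.2, w} : Finset _) ⊆ e := by
    intro e he
    obtain ⟨u, hu, v, hv, huv, hh⟩ := hL e he
    obtain ⟨w, hw, hwe⟩ := h4 (u, v) huv hh e (hLG he) hu hv
    exact ⟨(u,v), huv, w, hw, by simp [insert_subset_iff, hu, hv, hwe]⟩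
  have hc3 : ∀ p : Fin n × Fin n, p.1 ≠ p.2 → ∀ w ∈ W p, ({p.1, p.2, w} : Finset _).card = 3 := by
    intro p hp w hw
    rw [card_eq_three]
    exact ⟨_, _, _, hp, fun h => h2 p (h ▸ hw), fun h => h3 p (h ▸ hw), rfl⟩
  rcases L.eq_empty_or_nonempty with rfl | ⟨e, he⟩
  · simp
  have hr3 : 3 ≤ r := by
    obtain ⟨p, hp, w, hw, hs⟩ := hcov e he
    rw [← hG e (hLG he), ← hc3 p hp w hw]
    exact card_le_card hs
  have hsub : L ⊆ (univ : Finset (Fin n × Fin n)).biUnion (fun p => (W p).biUnion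
      (fun w => G.filter (fun e => ({p.1, p.2, w} : Finset _) ⊆ e))) := by
    intro e he
    obtain ⟨p, hp, w, hw, hs⟩ := hcov e he
    simp only [mem_biUnion, mem_univ, true_and, mem_filter]
    exact ⟨p, w, hw, hLG he, hs⟩
  have hin : ∀ p ∈ (univ : Finset (Fin n × Fin n)), ((W p).biUnion
      (fun w => G.filter (fun e => ({p.1, p.2, w} : Finset _) ⊆ e))).card ≤ M * n^(r-3) := by
    intro p _
    by_cases hp : p.1 = p.2
    · rw [h3' p hp]; simp
    refine card_biUnion_le.trans ((sum_le_card_nsmul _ _ (n^(r-3)) ?_).trans ?_)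
    · intro w hw
      have := card_sup G hG {p.1, p.2, w}
      rwa [hc3 p hp w hw] at this
    · simp only [smul_eq_mul]; exact Nat.mul_le_mul_right _ (h1 p)
  refine (card_le_card hsub).trans (card_biUnion_le.trans ((sum_le_card_nsmul _ _ _ hin).trans ?_))
  have : n^(r-1) = n * n * n^(r-3) := by
    have : r - 1 = (r-3) + 2 := by omega
    rw [this, pow_add]; ring
  rw [this]
  simp only [card_univ, Fintype.card_prod, Fintype.card_fin, smul_eq_mul]
  apply le_of_eq; ring

lemma bad_card {n r : ℕ} (G : Finset (Finset (Fin n))) (hG : IsRGraph r G)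
    (B : Finset (Fin n)) (L : Finset (Finset (Fin n))) (hLG : L ⊆ G)
    (hL : ∀ e ∈ L, ∃ u ∈ e, u ∈ B) :
    L.card ≤ B.card * n ^ (r-1) := by
  have hsub : L ⊆ B.biUnion (fun w => G.filter (fun e => ({w} : Finset _) ⊆ e)) := by
    intro e he
    obtain ⟨u, hu, hB⟩ := hL e he
    simp only [mem_biUnion, mem_filter]
    exact ⟨u, hB, hLG he, by simpa using hu⟩
  refine (card_le_card hsub).trans (card_biUnion_le.trans ((sum_le_card_nsmul _ _ (n^(r-1)) ?_).trans
    (by simp)))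
  intro w _
  have := card_sup G hG {w}
  simpa using this

lemma pair_card {n r : ℕ} (G : Finset (Finset (Fin n))) (hG : IsRGraph r G)
    (B : Finset (Fin n × Fin n)) (hB : ∀ p ∈ B, p.1 ≠ p.2)
    (L : Finset (Finset (Fin n))) (hLG : L ⊆ G)
    (hL : ∀ e ∈ L, ∃ p ∈ B, p.1 ∈ e ∧ p.2 ∈ e) :
    L.card ≤ B.card * n ^ (r-2) := by
  have hsub : L ⊆ B.biUnion (fun p => G.filter (fun e => ({p.1, p.2} : Finset _) ⊆ e)) := by
    intro e he
    obtain ⟨u, hu, h1, h2⟩ := hL e he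
    simp only [mem_biUnion, mem_filter]
    exact ⟨u, hu, hLG he, by simp [insert_subset_iff, h1, h2]⟩
  refine (card_le_card hsub).trans (card_biUnion_le.trans ((sum_le_card_nsmul _ _ (n^(r-2)) ?_).trans
    (by simp)))
  intro p hp
  have := card_sup G hG {p.1, p.2}
  rwa [card_pair (hB p hp)] at this

lemma idx_lt {n k a b : ℕ} (ha : a < k) (hb : b < n / k) : k * b + a < n := by
  have h1 : k * (b + 1) ≤ k * (n / k) := Nat.mul_le_mul_left _ hb
  have h2 := Nat.mul_div_le n k
  rw [mul_add] at h1; omega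

lemma class_card (n k i : ℕ) (hi : i < k) :
    n / k ≤ (univ.filter (fun v : Fin n => (v : ℕ) % k = i)).card := by
  calc n / k = (univ : Finset (Fin (n/k))).card := by simp
    _ ≤ _ := by
      refine Finset.card_le_card_of_injOn (fun j => ⟨k * j + i, idx_lt hi j.2⟩) ?_ ?_
      · intro j _
        simp [Nat.mod_eq_of_lt hi]
      · intro a _ b _ h
        simp only [Fin.mk.injEq, add_left_inj] at h
        exact Fin.ext (Nat.eq_of_mul_eq_mul_left (by omega) h)

lemma turan_lower (r n k : ℕ) (hk : 0 < k) : k.choose r * (n / k)^r ≤ turanNum r n k := by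
  let D := (powersetCard r (range k)).sigma (fun S => S.pi (fun _ => range (n/k)))
  have hD : D.card = k.choose r * (n/k)^r := by
    rw [card_sigma]
    rw [Finset.sum_congr rfl (g := fun _ => (n/k)^r)]
    · simp
    · intro S hS
      rw [card_pi]; simp [(mem_powersetCard.1 hS).2]
  rw [← hD, turanNum]
  -- map to finsets of naturals
  let F : (Σ S : Finset ℕ, (∀ a ∈ S, ℕ)) → Finset ℕ :=
    fun p => p.1.attach.image (fun a => k * p.2 a.1 a.2 + a.1)
  have hmod : ∀ a < k, ∀ x, (k * x + a) % k = a := fun a ha x => by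
    rw [Nat.mul_add_mod, Nat.mod_eq_of_lt ha]
  have himg : ∀ p ∈ D, (F p) ∈ (turanGraph r n k).image (fun e => e.image (fun v : Fin n => (v : ℕ))) := by
    rintro ⟨S, g⟩ hp
    simp only [D, mem_sigma, mem_powersetCard, mem_pi, mem_range] at hp
    obtain ⟨⟨hS, hSc⟩, hg⟩ := hp
    have hSk : ∀ a ∈ S, a < k := fun a ha => mem_range.1 (hS ha)
    have hlt : ∀ x ∈ F ⟨S, g⟩, x < n := by
      intro x hx
      simp only [F, mem_image, mem_attach, true_and, Subtype.exists] at hx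
      obtain ⟨a, ha, rfl⟩ := hx
      exact idx_lt (hSk a ha) (hg a ha)
    have hFe : ((univ : Finset (Fin n)).filter (fun v : Fin n => (v : ℕ) ∈ F ⟨S, g⟩)).image
        (fun v : Fin n => (v : ℕ)) = F ⟨S, g⟩ := by
      ext x
      simp only [mem_image, mem_filter, mem_univ, true_and]
      constructor
      · rintro ⟨v, hv, rfl⟩; exact hv
      · intro hx; exact ⟨⟨x, hlt x hx⟩, hx, rfl⟩
    refine mem_image.2 ⟨_, ?_, hFe⟩
    rw [turanGraph, mem_filter, mem_powersetCard]
    refine ⟨⟨subset_univ _, ?_⟩, ?_⟩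
    · rw [← card_image_of_injective _ (Fin.val_injective (n := n)), hFe]
      simp only [F]
      rw [card_image_of_injOn, card_attach, hSc]
      rintro ⟨a, ha⟩ _ ⟨b, hb⟩ _ h
      simp only at h
      have h1 := hmod a (hSk a ha) (g a ha)
      rw [h, hmod b (hSk b hb)] at h1
      exact Subtype.ext h1.symm
    · intro u hu v hv huv
      simp only [F, mem_filter, mem_univ, true_and, mem_image, mem_attach, Subtype.exists] at hu hv
      obtain ⟨a, ha, hua⟩ := hu
      obtain ⟨b, hb, hvb⟩ := hv
      rw [← hua, ← hvb, hmod a (hSk a ha), hmod b (hSk b hb)] at huv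
      subst huv
      exact Fin.ext (hua.symm.trans hvb)
  refine le_trans ?_ (card_image_le (f := fun e => e.image (fun v : Fin n => (v : ℕ))))
  refine Finset.card_le_card_of_injOn F himg ?_
  rintro ⟨S, g⟩ hp ⟨S', g'⟩ hp' h
  have hp : (⟨S, g⟩ : Σ S : Finset ℕ, (∀ a ∈ S, ℕ)) ∈ D := hp
  have hp' : (⟨S', g'⟩ : Σ S : Finset ℕ, (∀ a ∈ S, ℕ)) ∈ D := hp'
  simp only [D, mem_sigma, mem_powersetCard, mem_pi, mem_range] at hp hp'
  have hSk : ∀ a ∈ S, a < k := fun a ha => mem_range.1 (hp.1.1 ha)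
  have hSk' : ∀ a ∈ S', a < k := fun a ha => mem_range.1 (hp'.1.1 ha)
  have hrec : ∀ T : Finset ℕ, ∀ g : (∀ a ∈ T, ℕ), (∀ a ∈ T, a < k) →
      (F ⟨T, g⟩).image (fun x => x % k) = T := by
    intro T g hT
    ext x
    simp only [F, mem_image, mem_attach, true_and, Subtype.exists]
    constructor
    · rintro ⟨y, ⟨a, ha, rfl⟩, rfl⟩
      rwa [hmod a (hT a ha)]
    · intro hx
      exact ⟨_, ⟨x, hx, rfl⟩, hmod x (hT x hx) _⟩
  have hSS : S = S' := by
    rw [← hrec S g hSk, h, hrec S' g' hSk']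
  subst hSS
  congr 1
  funext a ha
  have hm : k * g a ha + a ∈ F ⟨S, g'⟩ := by
    rw [← h]
    simp only [F, mem_image, mem_attach, true_and, Subtype.exists]
    exact ⟨a, ha, rfl⟩
  simp only [F, mem_image, mem_attach, true_and, Subtype.exists] at hm
  obtain ⟨b, hb, hab⟩ := hm
  have h1 := congrArg (· % k) hab
  simp only [hmod a (hSk a ha), hmod b (hSk b hb)] at h1
  subst h1
  have : k * g' b hb = k * g b ha := by omega
  exact (Nat.eq_of_mul_eq_mul_left hk this).symm

end StabAux

namespace StabAux

section KC
open scoped Classical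
variable {V : Type*} [Fintype V]

noncomputable def kc (P : SimpleGraph V) (s : ℕ) : ℕ := (P.cliqueFinset s).card

lemma le_kc (P : SimpleGraph V) (s : ℕ) (G : Finset (Finset V)) (h : ∀ e ∈ G, P.IsNClique s e) :
    G.card ≤ kc P s :=
  card_le_card fun e he => (P.mem_cliqueFinset_iff).2 (h e he)

lemma kc_chain (P : SimpleGraph V) (k : ℕ) (hP : P.CliqueFree (k+1)) (s : ℕ)
    (hs2 : 2 ≤ s) (hs : s ≤ k) :
    (kc P s : ℝ) * k ^ s * k.choose 2
      ≤ k.choose s * (Fintype.card V : ℝ)^(s-2) * k^2 * kc P 2 := chain P k hP s hs2 hs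

lemma kc_two (P : SimpleGraph V) : 2 * (kc P 2 : ℝ) ≤ cnt univ univ P.Adj := by
  have h := dc1 P 1
  have h' : 2 * (kc P 2 : ℝ) = ∑ B ∈ P.cliqueFinset 1, ((extN P B).card : ℝ) := by
    rw [← h]; norm_num [kc]
  rw [h']
  let φ : V ↪ Finset V := ⟨fun x => {x}, Finset.singleton_injective⟩
  calc _ ≤ ∑ B ∈ univ.map φ, ((extN P B).card : ℝ) := by
        apply sum_le_sum_of_subset_of_nonneg
        · intro B hB
          rw [SimpleGraph.mem_cliqueFinset_iff] at hB
          obtain ⟨x, rfl⟩ := card_eq_one.1 hB.2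
          exact mem_map.2 ⟨x, mem_univ _, rfl⟩
        · intros; positivity
    _ = _ := by
        rw [sum_map, cnt]
        push_cast
        refine sum_congr rfl fun x _ => ?_
        simp [φ, extN]

lemma colorData (k : ℕ) (hk : 0 < k) (P : SimpleGraph V) (hP : P.CliqueFree (k+1))
    (τ n : ℝ) (hn : n = Fintype.card V) (hτ : 0 ≤ τ)
    (hE : (1 - 1/(k:ℝ)) * n^2 - τ^2 * n^2 ≤ 2 * (kc P 2 : ℝ)) :
    ∃ c : V → ℕ, (∀ v, c v < k) ∧
      (cnt univ univ (fun x y => P.Adj x y ∧ c x = c y) : ℝ) ≤ τ^2 * n^2 ∧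
      ∀ i < k, ((univ.filter (fun v => c v = i)).card : ℝ) ≤ n / k + τ * n := by
  obtain ⟨c, hc, hle⟩ := furedi P k univ (by
    intro t _ ht; exact hP t ht)
  have hc' : ∀ v, c v < k := fun v => hc v (mem_univ _)
  let a : ℕ → ℝ := fun i => ((univ.filter (fun v => c v = i)).card : ℝ)
  have hk0 : (0:ℝ) < k := by exact_mod_cast hk
  have hn0 : 0 ≤ n := by rw [hn]; positivity
  have hsum : ∑ i ∈ range k, a i = n := by
    rw [hn]
    have := card_eq_sum_card_fiberwise (f := c) (s := (univ : Finset V)) (t := range k)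
      (fun v _ => by simpa using hc' v)
    rw [← card_univ, this]; push_cast; rfl
  have hX : (cnt univ univ (fun x y => c x ≠ c y) : ℝ) = n^2 - ∑ i ∈ range k, (a i)^2 := by
    have h1 : (cnt univ univ (fun x y => c x ≠ c y) : ℝ)
        + ∑ i ∈ range k, (a i)^2 = n^2 := by
      have h2 : ∑ i ∈ range k, (a i)^2
          = ∑ x : V, ∑ y : V, if c x = c y then (1:ℝ) else 0 := by
        have h3 : ∀ x y : V, (if c x = c y then (1:ℝ) else 0)
            = ∑ i ∈ range k, (if c x = i then (1:ℝ) else 0) * (if c y = i then (1:ℝ) else 0) := by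
          intro x y
          rw [sum_eq_single (c x)]
          · simp [eq_comm]
          · intro b _ hb; simp [hb.symm]
          · intro h; exact absurd (mem_range.2 (hc' x)) h
        simp only [h3]
        have h4 : ∀ i, a i = ∑ x : V, if c x = i then (1:ℝ) else 0 := by
          intro i; simp [a]
        rw [sum_congr rfl (fun x _ => sum_comm), sum_comm]
        refine sum_congr rfl fun i _ => ?_
        rw [sq, h4, sum_mul_sum]
      rw [h2, cnt]
      push_cast
      rw [← sum_add_distrib]
      have : ∀ x : V, (∑ y : V, if c x ≠ c y then (1:ℝ) else 0)
          + (∑ y : V, if c x = c y then (1:ℝ) else 0) = n := by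
        intro x
        rw [← sum_add_distrib, hn, ← card_univ, ← nsmul_one, ← sum_const]
        refine sum_congr rfl fun y _ => ?_
        by_cases h : c x = c y <;> simp [h]
      rw [sum_congr rfl (fun x _ => this x)]
      simp [hn, sq]
    linarith
  have hvar : ∑ i ∈ range k, (a i - n/k)^2 = ∑ i ∈ range k, (a i)^2 - n^2/k := by
    have : ∀ i, (a i - n/k)^2 = (a i)^2 - (2*n/k) * a i + (n/k)^2 := fun i => by ring
    simp only [this, sum_add_distrib, sum_sub_distrib, ← mul_sum, hsum]
    simp
    field_simp
    ring
  have h2 := kc_two P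
  have hle' : (cnt univ univ P.Adj : ℝ) + cnt univ univ (fun x y => P.Adj x y ∧ c x = c y)
      ≤ cnt univ univ (fun x y => c x ≠ c y) := by exact_mod_cast hle
  have hkey : (cnt univ univ (fun x y => P.Adj x y ∧ c x = c y) : ℝ)
      + ∑ i ∈ range k, (a i - n/k)^2 ≤ τ^2 * n^2 := by
    have : (1 - 1/(k:ℝ)) * n^2 = n^2 - n^2/k := by ring
    rw [hvar]; linarith
  refine ⟨c, hc', ?_, ?_⟩
  · have : 0 ≤ ∑ i ∈ range k, (a i - n/k)^2 := sum_nonneg fun i _ => sq_nonneg _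
    linarith
  · intro i hi
    have h3 : (a i - n/k)^2 ≤ ∑ i ∈ range k, (a i - n/k)^2 :=
      single_le_sum (f := fun i => (a i - n/k)^2) (fun i _ => sq_nonneg _) (mem_range.2 hi)
    have h4 : (0:ℝ) ≤ cnt univ univ (fun x y => P.Adj x y ∧ c x = c y) := by positivity
    have h5 : (a i - n/k)^2 ≤ (τ * n)^2 := by rw [mul_pow]; linarith
    have h6 := abs_le_of_sq_le_sq h5 (by positivity)
    have : a i - n/k ≤ τ * n := (abs_le.1 h6).2
    show a i ≤ _
    linarith

end KC

lemma bern (x : ℝ) (hx : 1 ≤ x) (s : ℕ) : x^(s+1) - (s+1) * x^s ≤ (x-1)^(s+1) := by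
  induction s with
  | zero => simp
  | succ s ih =>
    have h1 := mul_le_mul_of_nonneg_left ih (sub_nonneg.2 hx)
    have h2 : 0 ≤ (s+1 : ℝ) * x^s := by positivity
    push_cast
    calc x^(s+1+1) - (s+1+1) * x^(s+1)
        = (x-1) * (x^(s+1) - (s+1)*x^s) - (s+1) * x^s := by ring
      _ ≤ (x-1) * (x-1)^(s+1) := by linarith
      _ = _ := by ring

lemma turan_lower_real (r n k : ℕ) (hr : 1 ≤ r) (hk : 0 < k) (hn : k ≤ n) :
    (k.choose r : ℝ) / k^r * n^r - k.choose r * r * n^(r-1) ≤ turanNum r n k := by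
  have h0 : (k.choose r : ℝ) * ((n/k : ℕ):ℝ)^r ≤ turanNum r n k := by
    exact_mod_cast turan_lower r n k hk
  refine le_trans ?_ h0
  have hk0 : (0:ℝ) < k := by exact_mod_cast hk
  have hk1 : (1:ℝ) ≤ k := by exact_mod_cast hk
  have hx : (1:ℝ) ≤ (n:ℝ)/k := by rw [le_div_iff₀ hk0]; simpa using (by exact_mod_cast hn : (k:ℝ) ≤ n)
  have hfl : (n:ℝ)/k - 1 ≤ ((n/k : ℕ):ℝ) := by
    rw [← Nat.floor_div_eq_div (K := ℝ)]
    exact (Nat.sub_one_lt_floor _).le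
  obtain ⟨s, rfl⟩ : ∃ s, r = s+1 := ⟨r-1, by omega⟩
  have hb := bern _ hx s
  have h1 : ((n:ℝ)/k - 1)^(s+1) ≤ ((n/k : ℕ):ℝ)^(s+1) :=
    pow_le_pow_left₀ (by linarith) hfl _
  have h2 : ((n:ℝ)/k)^s ≤ n^s :=
    pow_le_pow_left₀ (by linarith) (div_le_self (by positivity) hk1) _
  have h3 : ((s:ℝ)+1) * ((n:ℝ)/k)^s ≤ (s+1) * n^s := by gcongr
  have h4 : ((n:ℝ)/k)^(s+1) - (s+1) * n^s ≤ ((n/k : ℕ):ℝ)^(s+1) := by linarith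
  calc _ = (k.choose (s+1) : ℝ) * (((n:ℝ)/k)^(s+1) - (s+1) * n^s) := by
        rw [div_pow]; push_cast; ring
    _ ≤ _ := by gcongr

lemma choose_lower (n r : ℕ) (hn : 2 * r ≤ n) :
    (n:ℝ)^r / (2^r * r.factorial) ≤ n.choose r := by
  refine le_trans ?_ (Nat.pow_le_choose r n)
  rw [← div_div, ← div_pow]
  have h : (n:ℝ)/2 ≤ ((n+1-r : ℕ):ℝ) := by
    rw [div_le_iff₀ (by norm_num)]
    have : n ≤ (n+1-r)*2 := by omega
    exact_mod_cast this
  gcongr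

lemma structural {n r k : ℕ} (hr : 2 ≤ r) (hk : 0 < k)
    (G : Finset (Finset (Fin n))) (hG : IsRGraph r G) (M : ℕ)
    (hcf : (heavy G M).CliqueFree (k+1)) (τ : ℝ) (hτ : 0 ≤ τ)
    (hE : (1 - 1/(k:ℝ)) * (n:ℝ)^2 - τ^2 * (n:ℝ)^2 ≤ 2 * (kc (heavy G M) 2 : ℝ)) :
    ∃ σ : Fin n ≃ Fin n,
      ((((G.image fun e => e.image σ) \ turanGraph r n k).card : ℕ) : ℝ)
        ≤ (M + 2 * k) * (n:ℝ)^(r-1) + (k * τ + τ^2) * (n:ℝ)^r := by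
  classical
  obtain ⟨c, hc, hmono, hcl⟩ := colorData k hk (heavy G M) hcf τ n (by simp) hτ hE
  have hk0 : (0:ℝ) < k := by exact_mod_cast hk
  set t : ℕ := ⌈τ * n⌉₊ + 1 with ht
  have htle : (t : ℝ) ≤ τ * n + 2 := by
    have := (Nat.ceil_lt_add_one (show 0 ≤ τ * n by positivity)).le
    rw [ht]; push_cast; linarith
  have htge : τ * n + 1 ≤ (t:ℝ) := by
    have := Nat.le_ceil (τ * n)
    rw [ht]; push_cast; linarith
  obtain ⟨σ, hσ⟩ := align k t c (fun v : Fin n => (v:ℕ) % k) hc (by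
    intro i hi
    have h1 := class_card n k i hi
    have h2 := hcl i hi
    have hfl : (n:ℝ)/k - 1 ≤ ((n/k : ℕ):ℝ) := by
      rw [← Nat.floor_div_eq_div (K := ℝ)]
      exact (Nat.sub_one_lt_floor _).le
    have h1' : ((n/k : ℕ):ℝ) ≤ ((univ.filter (fun v : Fin n => (v : ℕ) % k = i)).card : ℝ) := by
      exact_mod_cast h1
    have : ((univ.filter (fun v => c v = i)).card : ℝ)
      ≤ ((univ.filter (fun v : Fin n => (v : ℕ) % k = i)).card : ℝ) + t := by linarith
    exact_mod_cast this)
  refine ⟨σ, ?_⟩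
  set P := heavy G M with hPdef
  set U := G.filter (fun e => e.image σ ∉ turanGraph r n k) with hU
  have hcard : ((G.image fun e => e.image σ) \ turanGraph r n k).card ≤ U.card := by
    refine (card_le_card (t := U.image (fun e => e.image σ)) ?_).trans card_image_le
    intro x hx
    obtain ⟨hx1, hx2⟩ := mem_sdiff.1 hx
    obtain ⟨e, he, rfl⟩ := mem_image.1 hx1
    exact mem_image_of_mem _ (mem_filter.2 ⟨he, hx2⟩)
  let B1 : Finset (Fin n) := univ.filter (fun v => (σ v : ℕ) % k ≠ c v)
  let B2 : Finset (Fin n × Fin n) := univ.filter (fun p => P.Adj p.1 p.2 ∧ c p.1 = c p.2)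
  let L0 := G.filter (fun e => ∃ u ∈ e, ∃ v ∈ e, u ≠ v ∧ ¬ P.Adj u v)
  let L1 := G.filter (fun e => ∃ u ∈ e, u ∈ B1)
  let L2 := G.filter (fun e => ∃ p ∈ B2, p.1 ∈ e ∧ p.2 ∈ e)
  have hsub : U ⊆ L0 ∪ (L1 ∪ L2) := by
    intro e he
    obtain ⟨heG, heT⟩ := mem_filter.1 he
    have : ∃ u ∈ e, ∃ v ∈ e, u ≠ v ∧ (σ u : ℕ) % k = (σ v : ℕ) % k := by
      by_contra hcon
      push Not at hcon
      apply heT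
      rw [turanGraph, mem_filter, mem_powersetCard]
      refine ⟨⟨subset_univ _, by rw [card_image_of_injective _ σ.injective, hG e heG]⟩, ?_⟩
      intro u hu v hv huv
      obtain ⟨u', hu', rfl⟩ := mem_image.1 hu
      obtain ⟨v', hv', rfl⟩ := mem_image.1 hv
      by_contra hne
      exact hcon u' hu' v' hv' (fun h => hne (by rw [h])) huv
    obtain ⟨u, hu, v, hv, huv, hmod⟩ := this
    simp only [mem_union]
    by_cases hadj : P.Adj u v
    · right
      by_cases h1 : (σ u : ℕ) % k = c u
      · by_cases h2 : (σ v : ℕ) % k = c v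
        · right
          exact mem_filter.2 ⟨heG, (u, v), mem_filter.2 ⟨mem_univ _, hadj, by
            show c u = c v
            rw [← h1, ← h2, hmod]⟩, hu, hv⟩
        · left; exact mem_filter.2 ⟨heG, v, hv, mem_filter.2 ⟨mem_univ _, h2⟩⟩
      · left; exact mem_filter.2 ⟨heG, u, hu, mem_filter.2 ⟨mem_univ _, h1⟩⟩
    · left; exact mem_filter.2 ⟨heG, u, hu, v, hv, huv, hadj⟩
  have c0 : L0.card ≤ M * n^(r-1) := light_card G hG M L0 (filter_subset _ _)
    (fun e he => (mem_filter.1 he).2)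
  have c1 : L1.card ≤ B1.card * n^(r-1) := bad_card G hG B1 L1 (filter_subset _ _)
    (fun e he => (mem_filter.1 he).2)
  have c2 : L2.card ≤ B2.card * n^(r-2) := pair_card G hG B2
    (fun p hp => (mem_filter.1 hp).2.1.ne) L2 (filter_subset _ _)
    (fun e he => (mem_filter.1 he).2)
  have hB1 : B1.card ≤ k * t := by convert hσ
  have hB2 : B2.card = cnt univ univ (fun x y => P.Adj x y ∧ c x = c y) := by
    simp only [B2, cnt]
    rw [card_filter, ← univ_product_univ, sum_product]
    refine sum_congr rfl fun x _ => sum_congr rfl fun y _ => ?_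
    congr
  have hB2' : (B2.card : ℝ) ≤ τ^2 * (n:ℝ)^2 := by rw [hB2]; exact hmono
  have hB1' : (B1.card : ℝ) ≤ k * (τ * n + 2) := by
    calc (B1.card : ℝ) ≤ ((k * t : ℕ) : ℝ) := by exact_mod_cast hB1
      _ = k * (t:ℝ) := by push_cast; rfl
      _ ≤ _ := by gcongr
  have hUc : U.card ≤ M * n^(r-1) + (B1.card * n^(r-1) + B2.card * n^(r-2)) := by
    refine (card_le_card hsub).trans ((card_union_le _ _).trans (add_le_add c0 ?_))
    exact (card_union_le _ _).trans (add_le_add c1 c2)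
  have p1 : (n:ℝ)^r = n * (n:ℝ)^(r-1) := by rw [← pow_succ']; congr 1; omega
  have p2 : (n:ℝ)^r = (n:ℝ)^2 * (n:ℝ)^(r-2) := by rw [← pow_add]; congr 1; omega
  calc ((((G.image fun e => e.image σ) \ turanGraph r n k).card : ℕ) : ℝ)
      ≤ ((M * n^(r-1) + (B1.card * n^(r-1) + B2.card * n^(r-2)) : ℕ) : ℝ) := by
        exact_mod_cast hcard.trans hUc
    _ = M * (n:ℝ)^(r-1) + (B1.card * (n:ℝ)^(r-1) + B2.card * (n:ℝ)^(r-2)) := by push_cast; rfl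
    _ ≤ M * (n:ℝ)^(r-1) + (k * (τ * n + 2) * (n:ℝ)^(r-1) + τ^2 * (n:ℝ)^2 * (n:ℝ)^(r-2)) := by
        gcongr
    _ = (M + 2 * k) * (n:ℝ)^(r-1) + (k * τ * (n * (n:ℝ)^(r-1))
          + τ^2 * ((n:ℝ)^2 * (n:ℝ)^(r-2))) := by ring
    _ = _ := by rw [← p1, ← p2]; ring

end StabAux

set_option maxHeartbeats 2000000 in
/-- **Lemma (Pikhurko's stability for expanded cliques).**  Fix `ℓ > r ≥ 2`.  For every
`ε₁ > 0` there are `η₁ > 0` and `n₀` such that any `H_{K_ℓ}^(r)`-free `r`-graph `G` of order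
`n ≥ n₀` with at least `t_r(n, ℓ-1) - η₁·n^r` edges is `ε₁`-close to `T_r(n, ℓ-1)`. -/
theorem stability_expanded_clique (r ℓ : ℕ) (hr : 2 ≤ r) (hrl : r < ℓ)
    (ε₁ : ℝ) (hε₁ : 0 < ε₁) :
    ∃ η₁ : ℝ, 0 < η₁ ∧ ∃ n₀ : ℕ, ∀ n : ℕ, n₀ ≤ n →
      ∀ G : Finset (Finset (Fin n)), IsRGraph r G →
        ¬ ContainsCopy (expansion r (⊤ : SimpleGraph (Fin ℓ))) G →
        (turanNum r n (ℓ - 1) : ℝ) - η₁ * (n : ℝ) ^ r ≤ (G.card : ℝ) →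
        EpsClose r n ε₁ G (turanGraph r n (ℓ - 1)) := by

  classical
  obtain ⟨k, rfl⟩ : ∃ k, ℓ = k + 1 := ⟨ℓ - 1, by omega⟩
  simp only [Nat.add_sub_cancel]
  have hrk : r ≤ k := by omega
  have hk : 0 < k := by omega
  have hk0 : (0:ℝ) < k := by exact_mod_cast hk
  set M : ℕ := (k+1) + Fintype.card (Sym2 (Fin (k+1))) * r with hM
  have hcr : (0:ℝ) < k.choose r := by exact_mod_cast Nat.choose_pos hrk
  have hc2 : (0:ℝ) < k.choose 2 := by exact_mod_cast Nat.choose_pos (by omega : 2 ≤ k)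
  set Q : ℝ := k^r * k.choose 2 / (k.choose r * k^2) with hQ
  have hQ0 : 0 < Q := by positivity
  set ε' : ℝ := ε₁ / (2^r * r.factorial) with hε'
  have hε'0 : 0 < ε' := by positivity
  set τ : ℝ := min 1 (ε' / (4 * (k+1))) with hτ
  have hτ0 : 0 < τ := by positivity
  have hτ1 : τ ≤ 1 := min_le_left _ _
  have hτ2 : 4 * (k+1) * τ ≤ ε' := by
    have : τ ≤ ε' / (4 * (k+1)) := min_le_right _ _
    rw [le_div_iff₀ (by positivity)] at this
    linarith
  set η : ℝ := min (τ^2 / (4 * Q)) (ε' / 6) with hη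
  have hη0 : 0 < η := by positivity
  have hη1 : 4 * Q * η ≤ τ^2 := by
    have : η ≤ τ^2 / (4 * Q) := min_le_left _ _
    rw [le_div_iff₀ (by positivity)] at this
    linarith
  have hη2 : 6 * η ≤ ε' := by
    have : η ≤ ε' / 6 := min_le_right _ _
    linarith
  set C : ℝ := M + 2 * k + k.choose r * r with hC
  refine ⟨η, hη0, max (2 * k) (max 1 ⌈C / η⌉₊), ?_⟩
  intro n hn G hG hcopy hsize
  have hn1 : 2 * k ≤ n := (le_max_left _ _).trans hn
  have hn2 : C ≤ η * n := by
    have h1 : ⌈C / η⌉₊ ≤ n := ((le_max_right _ _).trans (le_max_right _ _)).trans hn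
    have h2 : C / η ≤ n := (Nat.le_ceil _).trans (by exact_mod_cast h1)
    rw [div_le_iff₀ hη0] at h2
    linarith
  have hn0 : (0:ℝ) < n := by
    have : 0 < n := by omega
    exact_mod_cast this
  have p1 : (n:ℝ)^r = n * (n:ℝ)^(r-1) := by rw [← pow_succ']; congr 1; omega
  have p2 : (n:ℝ)^r = (n:ℝ)^2 * (n:ℝ)^(r-2) := by rw [← pow_add]; congr 1; omega
  have hCn : C * (n:ℝ)^(r-1) ≤ η * (n:ℝ)^r := by
    calc C * (n:ℝ)^(r-1) ≤ (η * n) * (n:ℝ)^(r-1) := by gcongr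
      _ = _ := by rw [p1]; ring
  have hcf : (StabAux.heavy G M).CliqueFree (k+1) :=
    StabAux.heavy_cliqueFree G hG M le_rfl hcopy
  -- number of cliques
  have hGk : (G.card : ℝ) ≤ M * (n:ℝ)^(r-1) + StabAux.kc (StabAux.heavy G M) r := by
    have h1 := StabAux.light_card G hG M
      (G.filter (fun e => ∃ u ∈ e, ∃ v ∈ e, u ≠ v ∧ ¬ (StabAux.heavy G M).Adj u v))
      (filter_subset _ _) (fun e he => (mem_filter.1 he).2)
    have h2 := StabAux.le_kc (StabAux.heavy G M) r
      (G.filter (fun e => ¬ ∃ u ∈ e, ∃ v ∈ e, u ≠ v ∧ ¬ (StabAux.heavy G M).Adj u v)) (by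
        intro e he
        obtain ⟨he1, he2⟩ := mem_filter.1 he
        push Not at he2
        refine (SimpleGraph.isNClique_iff _).2 ⟨?_, hG e he1⟩
        intro u hu v hv huv
        exact he2 u (by simpa using hu) v (by simpa using hv) huv)
    have h3 := card_filter_add_card_filter_not (s := G)
      (fun e => ∃ u ∈ e, ∃ v ∈ e, u ≠ v ∧ ¬ (StabAux.heavy G M).Adj u v)
    have h4 : G.card ≤ M * n^(r-1) + StabAux.kc (StabAux.heavy G M) r := by
      rw [← h3]; exact add_le_add h1 h2
    exact_mod_cast h4
  have hT := StabAux.turan_lower_real r n k (by omega) hk (by omega)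
  have hkr : ((k.choose r : ℝ) / k^r - 2 * η) * (n:ℝ)^r ≤ StabAux.kc (StabAux.heavy G M) r := by
    have hnn : 0 ≤ (2 * k : ℝ) * (n:ℝ)^(r-1) := by positivity
    have : C * (n:ℝ)^(r-1) = M * (n:ℝ)^(r-1) + 2 * k * (n:ℝ)^(r-1)
      + k.choose r * r * (n:ℝ)^(r-1) := by rw [hC]; ring
    nlinarith
  have hch := StabAux.kc_chain (StabAux.heavy G M) k hcf r hr hrk
  rw [Fintype.card_fin] at hch
  have hE : (1 - 1/(k:ℝ)) * (n:ℝ)^2 - τ^2 * (n:ℝ)^2 ≤ 2 * (StabAux.kc (StabAux.heavy G M) 2 : ℝ) := by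
    have hch2 : Q * StabAux.kc (StabAux.heavy G M) r
        ≤ (n:ℝ)^(r-2) * StabAux.kc (StabAux.heavy G M) 2 := by
      rw [hQ, div_mul_eq_mul_div, div_le_iff₀ (by positivity)]
      linarith
    have hQc : Q * ((k.choose r : ℝ) / k^r) = (1 - 1/(k:ℝ)) / 2 := by
      have : (k.choose 2 : ℝ) = k * (k-1) / 2 := Nat.cast_choose_two ℝ k
      rw [hQ, this]
      field_simp
    have h5 : Q * (((k.choose r : ℝ) / k^r - 2 * η) * (n:ℝ)^r)
        ≤ (n:ℝ)^(r-2) * StabAux.kc (StabAux.heavy G M) 2 :=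
      (mul_le_mul_of_nonneg_left hkr hQ0.le).trans hch2
    have h6 : (n:ℝ)^(r-2) * (((1 - 1/(k:ℝ)) / 2 - 2 * Q * η) * (n:ℝ)^2)
        ≤ (n:ℝ)^(r-2) * StabAux.kc (StabAux.heavy G M) 2 := by
      refine le_trans (le_of_eq ?_) h5
      rw [← hQc, p2]; ring
    have h7 := le_of_mul_le_mul_left h6 (by positivity)
    have h8 : 4 * Q * η * (n:ℝ)^2 ≤ τ^2 * (n:ℝ)^2 := by gcongr
    linarith
  obtain ⟨σ, hσ⟩ := StabAux.structural hr hk G hG M hcf τ hτ0.le hE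
  refine ⟨σ, ?_⟩
  set G' := G.image (fun e => e.image σ) with hG'
  set T := turanGraph r n k with hTdef
  have hG'c : G'.card = G.card :=
    card_image_of_injective _ (Finset.image_injective σ.injective)
  have hd : (T \ G').card + G'.card = (G' \ T).card + T.card := by
    rw [card_sdiff_add_card, card_sdiff_add_card, union_comm]
  have hd' : ((T \ G').card : ℝ) + G.card = (G' \ T).card + turanNum r n k := by
    rw [← hG'c]; exact_mod_cast hd
  have hun : (((G' \ T) ∪ (T \ G')).card : ℝ) ≤ (G' \ T).card + (T \ G').card := by
    exact_mod_cast card_union_le _ _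
  have hu : ((G' \ T).card : ℝ) ≤ (η + (k+1) * τ) * (n:ℝ)^r := by
    refine hσ.trans ?_
    have h1 : (M + 2 * k) * (n:ℝ)^(r-1) ≤ C * (n:ℝ)^(r-1) := by
      have : (0:ℝ) ≤ k.choose r * r := by positivity
      gcongr
      linarith
    have h2 : (k * τ + τ^2) * (n:ℝ)^r ≤ ((k+1) * τ) * (n:ℝ)^r := by
      gcongr
      nlinarith
    linarith
  have hfin : (((G' \ T) ∪ (T \ G')).card : ℝ) ≤ ε' * (n:ℝ)^r := by
    have h1 : (2 * (η + (k+1) * τ) + η) * (n:ℝ)^r ≤ ε' * (n:ℝ)^r := by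
      gcongr
      linarith
    linarith
  refine hfin.trans ?_
  have hcl := StabAux.choose_lower n r (by omega)
  calc ε' * (n:ℝ)^r = ε₁ * ((n:ℝ)^r / (2^r * r.factorial)) := by rw [hε']; ring
    _ ≤ _ := by gcongr
end

section
/- Let ℓ > r ≥ 2 be integers. Then π(H_{K_ℓ}^(r)) = (r!/(ℓ−1)^r)·C(ℓ−1, r); that is, ex(n, H_{K_ℓ}^(r))/C(n, r) converges as n → ∞ to (r!/(ℓ−1)^r)·C(ℓ−1, r). -/
open Finset

section MM
variable {V : Type*} [Fintype V] [DecidableEq V] (H : SimpleGraph V) [DecidableRel H.Adj]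

/-- common neighbours -/
def cnb (B : Finset V) : Finset V := Finset.univ.filter (fun w => ∀ u ∈ B, H.Adj w u)

lemma sum_over_pairs (s : ℕ) (f : Finset V → V → ℕ) :
    ∑ B ∈ H.cliqueFinset s, ∑ w ∈ cnb H B, f B w
      = ∑ A ∈ H.cliqueFinset (s+1), ∑ w ∈ A, f (A.erase w) w := by
  rw [Finset.sum_sigma', Finset.sum_sigma']
  refine Finset.sum_bij' (fun p _ => ⟨insert p.2 p.1, p.2⟩) (fun p _ => ⟨p.1.erase p.2, p.2⟩)
    ?_ ?_ ?_ ?_ ?_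
  · rintro ⟨B, w⟩ h
    simp only [mem_sigma, SimpleGraph.mem_cliqueFinset_iff, cnb, mem_filter, mem_univ, true_and] at h ⊢
    exact ⟨h.1.insert h.2, mem_insert_self _ _⟩
  · rintro ⟨A, w⟩ h
    simp only [mem_sigma, SimpleGraph.mem_cliqueFinset_iff, cnb, mem_filter, mem_univ, true_and] at h ⊢
    refine ⟨by simpa using h.1.erase_of_mem h.2, fun u hu => ?_⟩
    rw [mem_erase] at hu
    exact h.1.isClique h.2 hu.2 hu.1.symm
  · rintro ⟨B, w⟩ h
    simp only [mem_sigma, SimpleGraph.mem_cliqueFinset_iff, cnb, mem_filter, mem_univ, true_and] at h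
    have : w ∉ B := fun hw => H.loopless.irrefl w (h.2 w hw)
    simp [erase_insert this]
  · rintro ⟨A, w⟩ h
    simp only [mem_sigma] at h
    simp [insert_erase h.2]
  · rintro ⟨B, w⟩ h
    simp only [mem_sigma, SimpleGraph.mem_cliqueFinset_iff, cnb, mem_filter, mem_univ, true_and] at h
    have : w ∉ B := fun hw => H.loopless.irrefl w (h.2 w hw)
    simp [erase_insert this]

lemma sum_cnb (s : ℕ) : ∑ B ∈ H.cliqueFinset s, #(cnb H B) = (s+1) * #(H.cliqueFinset (s+1)) := by
  have := sum_over_pairs H s (fun _ _ => 1)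
  simp only [sum_const, smul_eq_mul, mul_one] at this
  rw [this, mul_comm, ← smul_eq_mul, ← Finset.sum_const]
  refine Finset.sum_congr rfl fun A hA => ?_
  exact ((SimpleGraph.mem_cliqueFinset_iff).1 hA).card_eq

lemma sum_erase_le (s : ℕ) (A : Finset V) (hA : #A = s + 1) :
    ∑ u ∈ A, #(cnb H (A.erase u)) ≤ Fintype.card V + s * #(cnb H A) := by
  have h1 : ∀ u, #(cnb H (A.erase u)) = ∑ w : V, if (∀ x ∈ A.erase u, H.Adj w x) then 1 else 0 := by
    intro u; simp [cnb]
  have h2 : Fintype.card V + s * #(cnb H A)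
      = ∑ w : V, (1 + s * if (∀ x ∈ A, H.Adj w x) then 1 else 0) := by
    rw [Finset.sum_add_distrib, ← Finset.mul_sum]; simp [cnb]
  rw [h2]
  simp_rw [h1]
  rw [Finset.sum_comm]
  refine Finset.sum_le_sum fun w _ => ?_
  by_cases hw : ∀ x ∈ A, H.Adj w x
  · rw [if_pos hw]
    refine (Finset.sum_le_card_nsmul A _ 1 (fun u _ => by split_ifs <;> simp)).trans ?_
    simp [hA, add_comm]
  · rw [if_neg hw]
    push Not at hw
    obtain ⟨x, hx, hwx⟩ := hw
    rw [Finset.sum_eq_single x]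
    · split_ifs <;> simp
    · intro u _ hux
      rw [if_neg]
      intro h
      exact hwx (h x (mem_erase.2 ⟨hux.symm, hx⟩))
    · intro h; exact absurd hx h

lemma moon_moser (s : ℕ) :
    ((s+1) * #(H.cliqueFinset (s+1)))^2 ≤ #(H.cliqueFinset s) *
      (Fintype.card V * #(H.cliqueFinset (s+1)) + s * ((s+2) * #(H.cliqueFinset (s+2)))) := by
  rw [← sum_cnb]
  refine sq_sum_le_card_mul_sum_sq.trans (Nat.mul_le_mul_left _ ?_)
  have := sum_over_pairs H s (fun B _ => #(cnb H B))
  simp only [sum_const, smul_eq_mul] at this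
  simp_rw [sq]
  rw [this, ← sum_cnb H (s+1)]
  refine (Finset.sum_le_sum fun A hA => sum_erase_le H s A
    ((SimpleGraph.mem_cliqueFinset_iff).1 hA).card_eq).trans ?_
  rw [Finset.sum_add_distrib, ← Finset.mul_sum]
  simp [mul_comm]

lemma ratio (t : ℕ) (hH : H.CliqueFree (t+1)) (j : ℕ) : ∀ s, s + j = t →
    (s+1) * t * #(H.cliqueFinset (s+1)) ≤ Fintype.card V * j * #(H.cliqueFinset s) := by
  induction j with
  | zero =>
    intro s hs
    have : s = t := by omega
    subst this
    simp [SimpleGraph.cliqueFinset_eq_empty_iff.2 hH]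
  | succ j ih =>
    intro s hs
    have h1 := ih (s+1) (by omega)
    have h2 := moon_moser H s
    generalize #(H.cliqueFinset (s+1+1)) = c at *
    generalize hb : #(H.cliqueFinset (s+1)) = b at *
    generalize #(H.cliqueFinset s) = a at *
    generalize Fintype.card V = n at *
    subst hs
    rcases Nat.eq_zero_or_pos b with h0 | h0
    · simp [h0]
    have h3 : (s+1) * b * ((s+1) * (s+(j+1)) * b) ≤ (s+1) * b * (n * (j+1) * a) := by
      calc (s+1) * b * ((s+1) * (s+(j+1)) * b) = (s+(j+1)) * ((s+1)*b)^2 := by ring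
        _ ≤ (s+(j+1)) * (a * (n * b + s * ((s+2) * c))) := Nat.mul_le_mul_left _ h2
        _ = a * ((s+(j+1)) * n * b + s * ((s + 1 + 1) * (s+(j+1)) * c)) := by ring
        _ ≤ a * ((s+(j+1)) * n * b + s * (n * j * b)) := by gcongr
        _ = _ := by ring
    exact Nat.le_of_mul_le_mul_left h3 (by positivity)

lemma zykov (t : ℕ) (hH : H.CliqueFree (t+1)) (s : ℕ) :
    s ≤ t → t^s * #(H.cliqueFinset s) ≤ Fintype.card V ^ s * t.choose s := by
  induction s with
  | zero =>
    intro _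
    have : #(H.cliqueFinset 0) ≤ 1 := by
      rw [Finset.card_le_one]
      intro a ha b hb
      simp only [SimpleGraph.mem_cliqueFinset_iff] at ha hb
      have := ha.card_eq
      have := hb.card_eq
      simp_all
    simpa using this
  | succ s ih =>
    intro hs
    have h1 := ih (by omega)
    obtain ⟨j, rfl⟩ : ∃ j, t = s + j := ⟨t - s, by omega⟩
    have h2 := ratio H (s+j) hH j s rfl
    have h3 := Nat.choose_succ_right_eq (s+j) s
    rw [Nat.add_sub_cancel_left] at h3
    refine Nat.le_of_mul_le_mul_left ?_ (Nat.succ_pos s)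
    calc (s+1) * ((s+j)^(s+1) * #(H.cliqueFinset (s+1)))
        = (s+j)^s * ((s+1) * (s+j) * #(H.cliqueFinset (s+1))) := by ring
      _ ≤ (s+j)^s * (Fintype.card V * j * #(H.cliqueFinset s)) := Nat.mul_le_mul_left _ h2
      _ = Fintype.card V * j * ((s+j)^s * #(H.cliqueFinset s)) := by ring
      _ ≤ Fintype.card V * j * (Fintype.card V ^ s * (s+j).choose s) := Nat.mul_le_mul_left _ h1
      _ = Fintype.card V ^ (s+1) * ((s+j).choose s * j) := by ring
      _ = _ := by rw [← h3, Nat.succ_eq_add_one]; ring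
end MM

section Upper

/-- the pair `u, v` has many disjoint extensions in `G` -/
def Heavy {n : ℕ} (G : Finset (Finset (Fin n))) (r M : ℕ) (u v : Fin n) : Prop :=
  ∀ S : Finset (Fin n), #S ≤ M → ∃ X : Finset (Fin n), #X = r - 2 ∧ Disjoint X S ∧
    insert u (insert v X) ∈ G

lemma Heavy.symm {n : ℕ} {G : Finset (Finset (Fin n))} {r M : ℕ} {u v : Fin n}
    (h : Heavy G r M u v) : Heavy G r M v u := by
  intro S hS
  obtain ⟨X, h1, h2, h3⟩ := h S hS
  exact ⟨X, h1, h2, by rwa [Finset.insert_comm]⟩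

/-- graph of heavy pairs -/
def heavyGraph {n : ℕ} (G : Finset (Finset (Fin n))) (r M : ℕ) : SimpleGraph (Fin n) where
  Adj u v := u ≠ v ∧ Heavy G r M u v
  symm := ⟨fun _ _ h => ⟨h.1.symm, h.2.symm⟩⟩
  loopless := ⟨fun _ h => h.1 rfl⟩

lemma greedy {ι β : Type*} [DecidableEq ι] [DecidableEq β] (k M : ℕ) (P : ι → Finset β → Prop)
    (C : Finset β) (T : Finset ι)
    (hP : ∀ i ∈ T, ∀ S : Finset β, #S ≤ M → ∃ X : Finset β, #X = k ∧ Disjoint X S ∧ P i X)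
    (hM : #C + #T * k ≤ M) :
    ∃ φ : ι → Finset β, (∀ i ∈ T, #(φ i) = k ∧ Disjoint (φ i) C ∧ P i (φ i)) ∧
      ∀ i ∈ T, ∀ j ∈ T, i ≠ j → Disjoint (φ i) (φ j) := by
  induction T using Finset.induction_on with
  | empty => exact ⟨fun _ => ∅, by simp, by simp⟩
  | insert a T ha ih =>
    rw [card_insert_of_notMem ha, add_mul, one_mul] at hM
    obtain ⟨φ, h1, h2⟩ := ih (fun i hi => hP i (mem_insert_of_mem hi)) (by omega)
    obtain ⟨X, hX1, hX2, hX3⟩ := hP a (mem_insert_self _ _) (C ∪ T.biUnion φ) (by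
      refine (card_union_le _ _).trans ?_
      have := card_biUnion_le_card_mul T φ k (fun i hi => (h1 i hi).1.le)
      omega)
    rw [disjoint_union_right, disjoint_biUnion_right] at hX2
    have hne : ∀ i ∈ T, i ≠ a := fun i hi h => ha (h ▸ hi)
    refine ⟨Function.update φ a X, ?_, ?_⟩
    · intro i hi
      rcases mem_insert.1 hi with rfl | hi
      · simp [hX1, hX2.1, hX3]
      · rw [Function.update_of_ne (hne i hi)]; exact h1 i hi
    · intro i hi j hj hij
      rcases mem_insert.1 hi with hia | hi2 <;> rcases mem_insert.1 hj with hja | hj2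
      · exact absurd (hia.trans hja.symm) hij
      · rw [hia, Function.update_self, Function.update_of_ne (hne j hj2)]; exact hX2.2 j hj2
      · rw [hja, Function.update_self, Function.update_of_ne (hne i hi2)]
        exact (hX2.2 i hi2).symm
      · rw [Function.update_of_ne (hne j hj2), Function.update_of_ne (hne i hi2)]
        exact h2 i hi2 j hj2 hij

lemma heavy_cliqueFree {n : ℕ} (G : Finset (Finset (Fin n))) (r ℓ M : ℕ)
    (hM : ℓ + #(⊤ : SimpleGraph (Fin ℓ)).edgeFinset * (r - 2) ≤ M)
    (hG : ¬ ContainsCopy (expansion r (⊤ : SimpleGraph (Fin ℓ))) G) :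
    (heavyGraph G r M).CliqueFree ℓ := by
  intro s hs
  apply hG
  let g := s.orderEmbOfFin hs.card_eq
  have hg : ∀ i j, i ≠ j → Heavy G r M (g i) (g j) := by
    intro i j hij
    exact (hs.isClique (s.orderEmbOfFin_mem hs.card_eq i) (s.orderEmbOfFin_mem hs.card_eq j)
      (g.injective.ne hij)).2
  obtain ⟨φ, h1, h2⟩ := greedy (ι := (⊤ : SimpleGraph (Fin ℓ)).edgeFinset) (r-2) M
    (fun e X => (sym2ToFinset e.1).image g ∪ X ∈ G) (univ.image g) univ (by
      rintro ⟨e, he⟩ - S hS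
      induction e using Sym2.ind with
      | _ i j =>
      have hij : i ≠ j := by simpa using he
      obtain ⟨X, hX1, hX2, hX3⟩ := hg i j hij S hS
      refine ⟨X, hX1, hX2, ?_⟩
      convert hX3 using 1
      ext x
      simp only [sym2ToFinset, mem_union, mem_image, mem_filter, mem_univ, true_and, Sym2.mem_iff,
        mem_insert]
      constructor
      · rintro (⟨a, rfl | rfl, rfl⟩ | h) <;> simp [*]
      · rintro (rfl | rfl | h) <;> simp [*]) (by
      refine le_trans (Nat.add_le_add_right card_image_le _) ?_
      simpa using hM)
  refine ⟨Sum.elim g (fun p => (φ p.1).orderEmbOfFin (h1 p.1 (mem_univ _)).1 p.2), ?_, ?_⟩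
  · refine Function.Injective.sumElim g.injective ?_ ?_
    · rintro ⟨e, i⟩ ⟨e', i'⟩ h
      by_cases hee : e = e'
      · subst hee
        simpa using h
      · exfalso
        have ha := (φ e).orderEmbOfFin_mem (h1 e (mem_univ _)).1 i
        have hb := (φ e').orderEmbOfFin_mem (h1 e' (mem_univ _)).1 i'
        simp only at h
        rw [h] at ha
        exact disjoint_left.1 (h2 e (mem_univ _) e' (mem_univ _) hee) ha hb
    · rintro a ⟨e, i⟩ h
      have ha := (φ e).orderEmbOfFin_mem (h1 e (mem_univ _)).1 i
      simp only at h
      rw [← h] at ha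
      exact disjoint_left.1 (h1 e (mem_univ _)).2.1 ha (mem_image_of_mem _ (mem_univ _))
  · intro E hE
    simp only [expansion, mem_image, mem_attach, true_and] at hE
    obtain ⟨e, rfl⟩ := hE
    convert (h1 e (mem_univ _)).2.2 using 1
    rw [image_union, image_image, image_image]
    congr 1
    ext x
    rw [mem_image]
    have := (φ e).range_orderEmbOfFin (h1 e (mem_univ _)).1
    have hx : x ∈ Set.range ((φ e).orderEmbOfFin (h1 e (mem_univ _)).1) ↔ x ∈ φ e := by
      rw [this, mem_coe]
    rw [← hx, Set.mem_range]
    simp only [mem_univ, true_and, Function.comp_apply, Sum.elim_inr]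

lemma card_superset_le {n : ℕ} (r : ℕ) (T : Finset (Fin n)) (hT : #T = 3) :
    n^2 * #((univ.powersetCard r).filter (fun e : Finset (Fin n) => T ⊆ e)) ≤ n^(r-1) := by
  rcases lt_or_ge r 3 with h | h
  · rw [filter_eq_empty_iff.2]
    · simp
    · intro e he hTe
      have := card_le_card hTe
      rw [mem_powersetCard] at he
      omega
  · have : #((univ.powersetCard r).filter (fun e : Finset (Fin n) => T ⊆ e)) ≤
        #((univ : Finset (Fin n)).powersetCard (r-3)) := by
      refine card_le_card_of_injOn (fun e => e \ T) ?_ ?_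
      · intro e he
        simp only [coe_filter, mem_powersetCard, subset_univ, true_and, Set.mem_ofPred_eq] at he
        rw [mem_coe, mem_powersetCard]
        simp [card_sdiff_of_subset he.2, he.1, hT]
      · intro e he e' he' hee
        simp only [coe_filter, mem_powersetCard, subset_univ, true_and, Set.mem_ofPred_eq] at he he' hee
        rw [← sdiff_union_of_subset he.2, hee, sdiff_union_of_subset he'.2]
    rw [card_powersetCard, card_univ, Fintype.card_fin] at this
    calc _ ≤ n^2 * n^(r-3) := Nat.mul_le_mul_left _ (this.trans (Nat.choose_le_pow _ _))
      _ = _ := by rw [← pow_add]; congr 1; omega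

lemma light_count {n : ℕ} (G : Finset (Finset (Fin n))) (r M : ℕ) (hr : 2 ≤ r) (hG : IsRGraph r G)
    (u v : Fin n) (huv : u ≠ v) (h : ¬ Heavy G r M u v) :
    n^2 * #(G.filter (fun e => u ∈ e ∧ v ∈ e)) ≤ M * n^(r-1) := by
  unfold Heavy at h
  push Not at h
  obtain ⟨S, hS, h⟩ := h
  have hsub : G.filter (fun e => u ∈ e ∧ v ∈ e) ⊆ (S.filter (fun x => x ≠ u ∧ x ≠ v)).biUnion
      (fun x => (univ.powersetCard r).filter (fun e : Finset (Fin n) => {u, v, x} ⊆ e)) := by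
    intro e he
    rw [mem_filter] at he
    obtain ⟨he, hu, hv⟩ := he
    have hc : #((e.erase u).erase v) = r - 2 := by
      rw [card_erase_of_mem (mem_erase.2 ⟨huv.symm, hv⟩), card_erase_of_mem hu, hG e he]; omega
    have := fun hd => h ((e.erase u).erase v) hc hd (by
      rwa [insert_erase (mem_erase.2 ⟨huv.symm, hv⟩), insert_erase hu])
    rw [imp_false, not_disjoint_iff] at this
    obtain ⟨x, hx, hxS⟩ := this
    simp only [mem_erase] at hx
    simp only [mem_biUnion, mem_filter, mem_powersetCard, subset_univ, true_and]
    refine ⟨x, ⟨hxS, hx.2.1, hx.1⟩, hG e he, ?_⟩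
    intro y hy
    simp only [mem_insert, mem_singleton] at hy
    rcases hy with rfl | rfl | rfl
    exacts [hu, hv, hx.2.2]
  calc _ ≤ n^2 * ∑ x ∈ S.filter (fun x => x ≠ u ∧ x ≠ v),
        #((univ.powersetCard r).filter (fun e : Finset (Fin n) => {u, v, x} ⊆ e)) :=
        Nat.mul_le_mul_left _ ((card_le_card hsub).trans card_biUnion_le)
    _ = ∑ x ∈ S.filter (fun x => x ≠ u ∧ x ≠ v), n^2 *
        #((univ.powersetCard r).filter (fun e : Finset (Fin n) => {u, v, x} ⊆ e)) := by
        rw [mul_sum]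
    _ ≤ ∑ x ∈ S.filter (fun x => x ≠ u ∧ x ≠ v), n^(r-1) := by
        refine sum_le_sum fun x hx => card_superset_le r _ ?_
        rw [mem_filter] at hx
        rw [card_eq_three]
        exact ⟨u, v, x, huv, hx.2.1.symm, hx.2.2.symm, rfl⟩
    _ ≤ M * n^(r-1) := by
        rw [sum_const, smul_eq_mul]
        exact Nat.mul_le_mul_right _ ((card_filter_le _ _).trans hS)

lemma upper_nat {n : ℕ} (G : Finset (Finset (Fin n))) (r t M : ℕ) (hr : 2 ≤ r) (hrt : r ≤ t)
    (hM : (t+1) + #(⊤ : SimpleGraph (Fin (t+1))).edgeFinset * (r - 2) ≤ M)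
    (hG : IsRGraph r G)
    (hGf : ¬ ContainsCopy (expansion r (⊤ : SimpleGraph (Fin (t+1)))) G) :
    t^r * #G ≤ n^r * t.choose r + t^r * (M * n^(r-1)) := by
  classical
  have hcf := heavy_cliqueFree G r (t+1) M hM hGf
  have hz := zykov (heavyGraph G r M) t hcf r hrt
  rw [Fintype.card_fin] at hz
  set D : Finset (Fin n × Fin n) := univ.filter (fun p => p.1 ≠ p.2 ∧ ¬ Heavy G r M p.1 p.2) with hD
  have hsub : G ⊆ (heavyGraph G r M).cliqueFinset r ∪
      D.biUnion (fun p => G.filter (fun e => p.1 ∈ e ∧ p.2 ∈ e)) := by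
    intro e he
    rw [mem_union]
    by_contra hcon
    push Not at hcon
    apply hcon.1
    rw [SimpleGraph.mem_cliqueFinset_iff]
    refine ⟨?_, hG e he⟩
    intro u hu v hv huv
    refine ⟨huv, ?_⟩
    by_contra hh
    apply hcon.2
    rw [mem_biUnion]
    exact ⟨(u, v), by simp [hD, huv, hh], by rw [mem_filter]; exact ⟨he, hu, hv⟩⟩
  have hlight : #(D.biUnion (fun p => G.filter (fun e => p.1 ∈ e ∧ p.2 ∈ e))) ≤ M * n^(r-1) := by
    rcases Nat.eq_zero_or_pos n with rfl | hn
    · have : D = ∅ := Finset.eq_empty_of_isEmpty D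
      simp [this]
    refine Nat.le_of_mul_le_mul_left ?_ (show 0 < n^2 by positivity)
    calc _ ≤ n^2 * ∑ p ∈ D, #(G.filter (fun e => p.1 ∈ e ∧ p.2 ∈ e)) :=
          Nat.mul_le_mul_left _ card_biUnion_le
      _ = ∑ p ∈ D, n^2 * #(G.filter (fun e => p.1 ∈ e ∧ p.2 ∈ e)) := by rw [mul_sum]
      _ ≤ ∑ p ∈ D, M * n^(r-1) := by
          refine sum_le_sum fun p hp => ?_
          rw [hD, mem_filter] at hp
          exact light_count G r M hr hG _ _ hp.2.1 hp.2.2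
      _ ≤ n^2 * (M * n^(r-1)) := by
          rw [sum_const, smul_eq_mul]
          refine Nat.mul_le_mul_right _ ((card_le_univ D).trans ?_)
          simp [sq]
  calc t^r * #G ≤ t^r * (#((heavyGraph G r M).cliqueFinset r) + M * n^(r-1)) :=
        Nat.mul_le_mul_left _ ((card_le_card hsub).trans ((card_union_le _ _).trans
          (Nat.add_le_add_left hlight _)))
    _ ≤ _ := by rw [mul_add]; exact Nat.add_le_add_right hz _

end Upper

section Lower

lemma turan_free (r n t : ℕ) (ht : 0 < t) :
    ¬ ContainsCopy (expansion r (⊤ : SimpleGraph (Fin (t+1)))) (turanGraph r n t) := by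
  rintro ⟨f, hf, h⟩
  obtain ⟨i, j, hij, he⟩ := Fintype.exists_ne_map_eq_of_card_lt
    (fun i : Fin (t+1) => (⟨(f (Sum.inl i) : ℕ) % t, Nat.mod_lt _ ht⟩ : Fin t)) (by simp)
  have hm : s(i, j) ∈ (⊤ : SimpleGraph (Fin (t+1))).edgeFinset := by simpa using hij
  have := h _ (mem_image_of_mem _ (mem_attach _ ⟨s(i,j), hm⟩))
  simp only [turanGraph, mem_filter] at this
  have h2 := this.2 (f (Sum.inl i)) (mem_image_of_mem _ (by simp [sym2ToFinset]))
    (f (Sum.inl j)) (mem_image_of_mem _ (by simp [sym2ToFinset])) (by simpa using he)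
  exact hij (Sum.inl_injective (hf h2))

lemma turan_card (r n t : ℕ) (ht : 0 < t) :
    t.choose r * (n / t)^r ≤ #(turanGraph r n t) := by
  rcases Nat.eq_zero_or_pos (n / t) with h0 | hq
  · rcases Nat.eq_zero_or_pos r with rfl | hr
    · simp only [Nat.choose_zero_right, pow_zero, mul_one, Nat.one_le_iff_ne_zero]
      rw [Finset.card_ne_zero]
      exact ⟨∅, by simp [turanGraph]⟩
    · simp [h0, hr.ne']
  have hlt : ∀ (a : Fin t) (k : ℕ), k < n / t → k * t + a < n := by
    intro a k hk
    calc k * t + a < k * t + t := Nat.add_lt_add_left a.2 _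
      _ = (k+1) * t := by ring
      _ ≤ (n/t) * t := Nat.mul_le_mul_right _ hk
      _ ≤ n := Nat.div_mul_le_self n t
  haveI : NeZero (n/t) := ⟨hq.ne'⟩
  let Φ : (Σ _ : Finset (Fin t), (Fin t → Fin (n/t))) → Finset (Fin n) := fun p =>
    p.1.image (fun a => ⟨(p.2 a : ℕ) * t + a, hlt a _ (p.2 a).2⟩)
  let Q : Finset (Fin t) → Finset (Fin t → Fin (n/t)) := fun A =>
    Fintype.piFinset (fun a => if a ∈ A then univ else {0})
  have hQ : ∀ A, #(Q A) = (n/t)^(#A) := by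
    intro A
    simp only [Q, Fintype.card_piFinset, apply_ite Finset.card, card_univ, Fintype.card_fin,
      card_singleton]
    rw [Finset.prod_ite]; simp
  have hcard : #((univ.powersetCard r).sigma Q) = t.choose r * (n/t)^r := by
    rw [card_sigma, sum_congr rfl (fun A hA => by
      rw [hQ, (mem_powersetCard.1 hA).2]), sum_const]
    simp
  have hmod : ∀ (a : Fin t) (k : ℕ), (k * t + a) % t = a := by
    intro a k
    rw [add_comm, Nat.add_mul_mod_self_right, Nat.mod_eq_of_lt a.2]
  rw [← hcard]
  refine card_le_card_of_injOn Φ ?_ ?_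
  · rintro ⟨A, f⟩ hp
    simp only [coe_sigma, Set.mem_sigma_iff, mem_coe, mem_powersetCard, subset_univ, true_and] at hp
    simp only [turanGraph, mem_coe, mem_filter, mem_powersetCard, subset_univ, true_and, Φ]
    refine ⟨?_, ?_⟩
    · rw [card_image_of_injective, hp.1]
      intro a b hab
      have := congrArg (fun x : Fin n => (x : ℕ) % t) hab
      simp only [hmod] at this
      exact Fin.ext this
    · intro u hu v hv huv
      rw [mem_image] at hu hv
      obtain ⟨a, -, rfl⟩ := hu
      obtain ⟨b, -, rfl⟩ := hv
      simp only [hmod] at huv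
      rw [Fin.ext huv]
  · have key : ∀ (A : Finset (Fin t)) (f : Fin t → Fin (n/t)) (a : Fin t) (k : Fin (n/t)),
        (⟨(k : ℕ) * t + a, hlt a _ k.2⟩ : Fin n) ∈ Φ ⟨A, f⟩ ↔ a ∈ A ∧ f a = k := by
      intro A f a k
      simp only [Φ, mem_image]
      constructor
      · rintro ⟨b, hb, h⟩
        have h1 := congrArg (fun x : Fin n => (x : ℕ)) h
        simp only at h1
        have h2 := congrArg (· % t) h1
        simp only [hmod] at h2
        have h3 := Fin.ext h2
        subst h3
        refine ⟨hb, Fin.ext ?_⟩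
        exact Nat.eq_of_mul_eq_mul_right ht (by omega)
      · rintro ⟨ha, rfl⟩
        exact ⟨a, ha, rfl⟩
    rintro ⟨A, f⟩ hp ⟨B, g⟩ hp' h
    simp only [coe_sigma, Set.mem_sigma_iff, mem_coe, Q, Fintype.mem_piFinset] at hp hp'
    have hk : ∀ a k, (a ∈ A ∧ f a = k) ↔ (a ∈ B ∧ g a = k) := by
      intro a k
      rw [← key, ← key, h]
    have hAB : A = B := by
      ext a
      exact ⟨fun ha => ((hk a _).1 ⟨ha, rfl⟩).1, fun ha => ((hk a _).2 ⟨ha, rfl⟩).1⟩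
    subst hAB
    have : f = g := by
      funext a
      by_cases ha : a ∈ A
      · exact ((hk a _).2 ⟨ha, rfl⟩).2
      · have h1 := hp.2 a
        have h2 := hp'.2 a
        simp only [ha, if_false, mem_singleton] at h1 h2
        rw [h1, h2]
    subst this
    rfl

end Lower

section Final
open Filter Topology

lemma ratio_tendsto (r : ℕ) :
    Tendsto (fun n : ℕ => (n : ℝ)^r / (n.choose r : ℝ)) atTop (𝓝 (r.factorial : ℝ)) := by
  have h := isEquivalent_choose r
  have h2 := (Asymptotics.isEquivalent_iff_tendsto_one ?_).1 h.symm
  · have h3 := h2.const_mul (r.factorial : ℝ)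
    rw [mul_one] at h3
    refine h3.congr fun n => ?_
    simp only [Pi.div_apply]
    have : (r.factorial : ℝ) ≠ 0 := by positivity
    field_simp
  · filter_upwards [eventually_ge_atTop r] with n hn
    have := Nat.choose_pos hn
    positivity

lemma bdd {α : Type*} (r n : ℕ) (H : Finset (Finset α)) :
    BddAbove {m | ∃ G : Finset (Finset (Fin n)), IsRGraph r G ∧ ¬ ContainsCopy H G ∧ #G = m} := by
  refine ⟨Fintype.card (Finset (Fin n)), ?_⟩
  rintro m ⟨G, -, -, rfl⟩
  exact card_le_univ G

end Final

theorem turan_density_expanded_clique (r ℓ : ℕ) (hr : 2 ≤ r) (hrl : r < ℓ) :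
    Filter.Tendsto
      (fun n => (exNum r n (expansion r (⊤ : SimpleGraph (Fin ℓ))) : ℝ) / (n.choose r))
      Filter.atTop
      (nhds ((r.factorial : ℝ) / ((ℓ - 1 : ℕ) : ℝ) ^ r * ((ℓ - 1).choose r : ℝ))) := by
  obtain ⟨t, rfl⟩ : ∃ t, ℓ = t + 1 := ⟨ℓ - 1, by omega⟩
  rw [Nat.add_sub_cancel]
  have hrt : r ≤ t := by omega
  have ht : 0 < t := by omega
  have htR : (0:ℝ) < t := by exact_mod_cast ht
  set M := (t+1) + #(⊤ : SimpleGraph (Fin (t+1))).edgeFinset * (r - 2) with hM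
  have hlim := ratio_tendsto r
  have hfl : Filter.Tendsto (fun n : ℕ => ((n / t : ℕ) : ℝ) / n) Filter.atTop (nhds (1 / t)) := by
    have := (tendsto_nat_floor_mul_div_atTop (R := ℝ) (a := 1 / t) (by positivity)).comp
      tendsto_natCast_atTop_atTop
    refine this.congr fun n => ?_
    simp only [Function.comp_apply]
    rw [one_div_mul_eq_div, Nat.floor_div_eq_div]
  have hlow : Filter.Tendsto (fun n : ℕ => (t.choose r : ℝ) * ((((n / t : ℕ) : ℝ) / n)^r *
      ((n : ℝ)^r / (n.choose r : ℝ)))) Filter.atTop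
      (nhds ((r.factorial : ℝ) / (t : ℝ) ^ r * (t.choose r : ℝ))) := by
    have := ((hfl.pow r).mul hlim).const_mul (t.choose r : ℝ)
    convert this using 2
    rw [one_div, inv_pow]; ring
  have hup : Filter.Tendsto (fun n : ℕ => ((t.choose r : ℝ) / t^r + M * (n : ℝ)⁻¹) *
      ((n : ℝ)^r / (n.choose r : ℝ))) Filter.atTop
      (nhds ((r.factorial : ℝ) / (t : ℝ) ^ r * (t.choose r : ℝ))) := by
    have := (((tendsto_inv_atTop_nhds_zero_nat (𝕜 := ℝ)).const_mul (M : ℝ)).const_add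
      ((t.choose r : ℝ) / t^r)).mul hlim
    convert this using 2
    ring
  refine tendsto_of_tendsto_of_tendsto_of_le_of_le' hlow hup ?_ ?_
  · filter_upwards [Filter.eventually_ge_atTop 1] with n hn
    have hn' : (0:ℝ) < n := by exact_mod_cast hn
    have h1 : t.choose r * (n / t)^r ≤ exNum r n (expansion r (⊤ : SimpleGraph (Fin (t+1)))) := by
      refine (turan_card r n t ht).trans (le_csSup (bdd _ _ _) ⟨turanGraph r n t, ?_, turan_free r n t ht, rfl⟩)
      intro e he
      simp only [turanGraph, mem_filter, mem_powersetCard] at he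
      exact he.1.2
    have h2 : (t.choose r : ℝ) * ((n / t : ℕ) : ℝ)^r ≤
      exNum r n (expansion r (⊤ : SimpleGraph (Fin (t+1)))) := by exact_mod_cast h1
    have : (t.choose r : ℝ) * ((((n / t : ℕ) : ℝ) / n)^r * ((n : ℝ)^r / (n.choose r : ℝ)))
      = (t.choose r : ℝ) * ((n / t : ℕ) : ℝ)^r / (n.choose r : ℝ) := by
      rw [div_pow]; field_simp
    rw [this]
    gcongr
  · filter_upwards [Filter.eventually_ge_atTop 1] with n hn
    have hn' : (0:ℝ) < n := by exact_mod_cast hn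
    have h1 : (exNum r n (expansion r (⊤ : SimpleGraph (Fin (t+1)))) : ℝ) ≤
        ((t.choose r : ℝ) / t^r + M * (n : ℝ)⁻¹) * (n:ℝ)^r := by
      have hmem : exNum r n (expansion r (⊤ : SimpleGraph (Fin (t+1)))) ∈ {m | ∃ G : Finset (Finset (Fin n)), IsRGraph r G ∧ ¬ ContainsCopy (expansion r (⊤ : SimpleGraph (Fin (t+1)))) G ∧ #G = m} := by
        refine Nat.sSup_mem ?_ (bdd _ _ _)
        refine ⟨_, turanGraph r n t, ?_, turan_free r n t ht, rfl⟩
        intro e he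
        simp only [turanGraph, mem_filter, mem_powersetCard] at he
        exact he.1.2
      obtain ⟨G, hG1, hG2, hG3⟩ := hmem
      rw [← hG3]
      have h := upper_nat G r t M hr hrt le_rfl hG1 hG2
      have h' : (t:ℝ)^r * #G ≤ (n:ℝ)^r * t.choose r + (t:ℝ)^r * (M * (n:ℝ)^(r-1)) := by
        exact_mod_cast h
      have hpow : (n:ℝ)^r = n * (n:ℝ)^(r-1) := by
        rw [← pow_succ']; congr 1; omega
      have htr : (0:ℝ) < (t:ℝ)^r := by positivity
      refine le_of_mul_le_mul_left (h'.trans_eq ?_) htr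
      have e1 : (M : ℝ) * (n:ℝ)^(r-1) = M * (n:ℝ)⁻¹ * (n:ℝ)^r := by
        rw [hpow]; field_simp
      rw [e1]
      field_simp
    rw [← mul_div_assoc]
    gcongr
end

section
/- Every dense r-graph covers pairs; that is, if G is an r-graph such that λ(G') < λ(G) for every proper subgraph G' of G, then for every pair of vertices u, v of G there is an edge of G containing both u and v. -/
open Finset

lemma lag_bdd {α : Type*} [Fintype α] (G : Finset (Finset α)) :
    BddAbove {x : ℝ | ∃ w : α → ℝ, (∀ i, 0 ≤ w i) ∧ (∑ i, w i) = 1 ∧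
      x = ∑ e ∈ G, ∏ i ∈ e, w i} := by
  refine ⟨(G.card : ℝ), ?_⟩
  rintro x ⟨w, h0, h1, rfl⟩
  have hle : ∀ i, w i ≤ 1 := fun i => by
    rw [← h1]
    exact Finset.single_le_sum (fun j _ => h0 j) (Finset.mem_univ i)
  calc ∑ e ∈ G, ∏ i ∈ e, w i ≤ ∑ e ∈ G, (1 : ℝ) :=
        Finset.sum_le_sum fun e _ => Finset.prod_le_one (fun i _ => h0 i) (fun i _ => hle i)
    _ = (G.card : ℝ) := by simp

open Classical in
/-- Moving all the weight of `v` to `u`. -/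
noncomputable def shiftW {α : Type*} (w : α → ℝ) (u v : α) : α → ℝ :=
  fun i => if i = v then 0 else if i = u then w u + w v else w i

open Classical in
lemma shiftW_le {α : Type*} [Fintype α] (G : Finset (Finset α)) (w : α → ℝ)
    (h0 : ∀ i, 0 ≤ w i) (h1 : ∑ i, w i = 1) (u v : α) (huv : u ≠ v) :
    ∑ e ∈ G, ∏ i ∈ e, shiftW w u v i ≤ lagrangian (G.filter (fun e => v ∉ e)) := by
  have hs : ∑ e ∈ G, ∏ i ∈ e, shiftW w u v i
      = ∑ e ∈ G.filter (fun e => v ∉ e), ∏ i ∈ e, shiftW w u v i := by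
    symm
    apply Finset.sum_filter_of_ne
    intro e _ hne hve
    exact hne (Finset.prod_eq_zero hve (by simp [shiftW]))
  rw [hs]
  refine le_csSup (lag_bdd _) ⟨shiftW w u v, ?_, ?_, rfl⟩
  · intro i
    have := h0 u
    have := h0 v
    have := h0 i
    unfold shiftW
    split_ifs <;> linarith
  · rw [← h1]
    have hd : ∀ i, shiftW w u v i
        = w i + (if i = u then w v else 0) - (if i = v then w v else 0) := by
      intro i
      unfold shiftW
      by_cases hv : i = v
      · subst hv; simp [Ne.symm huv]
      · by_cases hu : i = u
        · subst hu; simp [huv]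
        · simp [hu, hv]
    simp [hd, Finset.sum_add_distrib, Finset.sum_sub_distrib]


open Classical in
lemma shiftW_edge {α : Type*} (w : α → ℝ) (u v : α) (huv : u ≠ v) (a b : ℝ) (hab : a + b = 1)
    (ha : a * (w u + w v) = w u) (hb : b * (w u + w v) = w v)
    (e : Finset α) (he : ¬ (u ∈ e ∧ v ∈ e)) :
    ∏ i ∈ e, w i = a * ∏ i ∈ e, shiftW w u v i + b * ∏ i ∈ e, shiftW w v u i := by
  by_cases hu : u ∈ e
  · have hv : v ∉ e := fun h => he ⟨hu, h⟩
    have h2 : ∏ i ∈ e, shiftW w v u i = 0 := Finset.prod_eq_zero hu (by simp [shiftW])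
    have h3 : ∏ i ∈ e.erase u, shiftW w u v i = ∏ i ∈ e.erase u, w i := by
      refine Finset.prod_congr rfl fun i hi => ?_
      have hiu := Finset.ne_of_mem_erase hi
      have hiv : i ≠ v := fun h => hv (h ▸ Finset.mem_of_mem_erase hi)
      simp [shiftW, hiu, hiv]
    rw [h2, ← Finset.mul_prod_erase e _ hu, ← Finset.mul_prod_erase e (shiftW w u v) hu, h3]
    have h4 : shiftW w u v u = w u + w v := by simp [shiftW, huv]
    rw [h4, mul_zero, add_zero, ← mul_assoc, ha]
  · have hne : ∀ i ∈ e, i ≠ u := fun i hi h => hu (h ▸ hi)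
    by_cases hv : v ∈ e
    · have h2 : ∏ i ∈ e, shiftW w u v i = 0 := Finset.prod_eq_zero hv (by simp [shiftW])
      have h3 : ∏ i ∈ e.erase v, shiftW w v u i = ∏ i ∈ e.erase v, w i := by
        refine Finset.prod_congr rfl fun i hi => ?_
        have hiv := Finset.ne_of_mem_erase hi
        have hiu := hne i (Finset.mem_of_mem_erase hi)
        simp [shiftW, hiu, hiv]
      rw [h2, ← Finset.mul_prod_erase e _ hv, ← Finset.mul_prod_erase e (shiftW w v u) hv, h3]
      have h4 : shiftW w v u v = w u + w v := by simp [shiftW, huv.symm, add_comm]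
      rw [h4, mul_zero, zero_add, ← mul_assoc, hb]
    · have hnv : ∀ i ∈ e, i ≠ v := fun i hi h => hv (h ▸ hi)
      have h3 : ∏ i ∈ e, shiftW w v u i = ∏ i ∈ e, w i :=
        Finset.prod_congr rfl fun i hi => by simp [shiftW, hne i hi, hnv i hi]
      have h4 : ∏ i ∈ e, shiftW w u v i = ∏ i ∈ e, w i :=
        Finset.prod_congr rfl fun i hi => by simp [shiftW, hne i hi, hnv i hi]
      rw [h3, h4, ← add_mul, hab, one_mul]

/-- **Lemma (Frankl–Füredi, Sidorenko).**  Every dense `r`-graph covers pairs: if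
`λ(G') < λ(G)` for every proper subgraph `G'` of `G`, then every pair of distinct vertices
of `G` (vertices lying in some edge) is contained in a common edge of `G`. -/
theorem dense_covers_pairs {α : Type*} [Fintype α]
    (r : ℕ) (G : Finset (Finset α)) (hG : IsRGraph r G)
    (hdense : ∀ G' : Finset (Finset α), G' ⊂ G → lagrangian G' < lagrangian G)
    (u v : α) (hu : ∃ e ∈ G, u ∈ e) (hv : ∃ e ∈ G, v ∈ e) (huv : u ≠ v) :
    ∃ e ∈ G, u ∈ e ∧ v ∈ e := by
  classical
  by_contra hcon
  push Not at hcon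
  have hprop : ∀ x : α, (∃ e ∈ G, x ∈ e) →
      lagrangian (G.filter (fun e => x ∉ e)) < lagrangian G := by
    rintro x ⟨e, he, hx⟩
    apply hdense
    rw [Finset.filter_ssubset]
    exact ⟨e, he, by simpa using hx⟩
  have hlu := hprop u hu
  have hlv := hprop v hv
  have hmax : lagrangian G ≤
      max (lagrangian (G.filter (fun e => v ∉ e))) (lagrangian (G.filter (fun e => u ∉ e))) := by
    apply csSup_le
    · refine ⟨_, fun i => if i = u then 1 else 0, ?_, ?_, rfl⟩
      · intro i
        dsimp only
        split_ifs <;> norm_num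
      · simp
    · rintro x ⟨w, h0, h1, rfl⟩
      obtain ⟨a, b, ha0, hb0, hab, ha, hb⟩ : ∃ a b : ℝ, 0 ≤ a ∧ 0 ≤ b ∧ a + b = 1 ∧
          a * (w u + w v) = w u ∧ b * (w u + w v) = w v := by
        have hwu := h0 u
        have hwv := h0 v
        by_cases hs : w u + w v = 0
        · refine ⟨1, 0, by norm_num, le_rfl, by norm_num, ?_, ?_⟩ <;> linarith
        · refine ⟨w u / (w u + w v), w v / (w u + w v), by positivity, by positivity, ?_, ?_, ?_⟩
          · field_simp
          · field_simp
          · field_simp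
      have h2 := shiftW_le G w h0 h1 u v huv
      have h3 := shiftW_le G w h0 h1 v u huv.symm
      rw [Finset.sum_congr rfl (fun e he => shiftW_edge w u v huv a b hab ha hb e
        (fun h => hcon e he h.1 h.2)), Finset.sum_add_distrib, ← Finset.mul_sum, ← Finset.mul_sum]
      have h4 := mul_le_mul_of_nonneg_left (h2.trans (le_max_left _
        (lagrangian (G.filter (fun e => u ∉ e))))) ha0
      have h5 := mul_le_mul_of_nonneg_left (h3.trans (le_max_right
        (lagrangian (G.filter (fun e => v ∉ e))) _)) hb0
      refine (add_le_add h4 h5).trans ?_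
      rw [← add_mul, hab, one_mul]
  exact absurd hmax (not_le.mpr (max_lt hlv hlu))
end

section
/- Let F be an r-graph. Then π(F) = sup{ r!·λ(G) : G is an F-hom-free r-graph }; that is, the sequence ex(n,F)/C(n,r) converges as n → ∞ and its limit equals the supremum of r!·λ(G) over all r-graphs G admitting no homomorphism from F. -/
open Finset

theorem sum_weights_one {ι V : Type*} [Fintype ι] [DecidableEq ι] [Fintype V] (w : V → ℝ)
    (h1 : ∑ v, w v = 1) : ∑ x : ι → V, ∏ i, w (x i) = 1 := by
  have := Fintype.prod_sum (fun (_ : ι) (v : V) => w v)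
  rw [← this]; simp [h1]

theorem tsum_fcons {m : ℕ} {X : Type*} [Fintype X] (h : (Fin (m+1) → X) → ℝ) :
    ∑ a, h a = ∑ x : X, ∑ y : Fin m → X, h (Fin.cons x y) := by
  rw [← Fintype.sum_prod_type', ← (Fin.consEquiv (fun _ : Fin (m+1) => X)).sum_comp]
  rfl

theorem tprod_fcons {m : ℕ} {X : Type*} [Fintype X] (h : (Fin (m+1) → X) → ℝ) :
    ∏ a, h a = ∏ x : X, ∏ y : Fin m → X, h (Fin.cons x y) := by
  rw [← Fintype.prod_prod_type', ← (Fin.consEquiv (fun _ : Fin (m+1) => X)).prod_comp]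
  rfl

theorem blow_up {V τ : Type*} [Fintype V] [Fintype τ] [DecidableEq τ] (w : V → ℝ)
    (h0 : ∀ v, 0 ≤ w v) (h1 : ∑ v, w v = 1) (m : ℕ) :
    ∀ g : (Fin m → V) → ℝ, (∀ x, 0 ≤ g x) →
    (∑ x : Fin m → V, (∏ i, w (x i)) * g x) ^ (Fintype.card τ ^ m) ≤
      ∑ a : Fin m → τ → V, (∏ i, ∏ j, w (a i j)) *
        ∏ c : Fin m → τ, g (fun i => a i (c i)) := by
  induction m with
  | zero => 
    intro g hg
    simp
    apply le_of_eq
    congr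
    ext i
    exact i.elim0
  | succ m ih => 
    intro g hg
    have e1 : ∑ x : Fin (m+1) → V, (∏ i, w (x i)) * g x =
        ∑ y : Fin m → V, (∏ i, w (y i)) * ∑ v, w v * g (Fin.cons v y) := by
      rw [tsum_fcons, Finset.sum_comm]
      refine Finset.sum_congr rfl fun y _ => ?_
      rw [Finset.mul_sum]
      refine Finset.sum_congr rfl fun v _ => ?_
      rw [Fin.prod_univ_succ]
      simp
      ring
    have hP : ∀ y : Fin m → V, 0 ≤ ∏ i, w (y i) := fun y => Finset.prod_nonneg fun i _ => h0 _
    have hQ : ∀ x : τ → V, 0 ≤ ∏ i, w (x i) := fun y => Finset.prod_nonneg fun i _ => h0 _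
    have s1 : (∑ x : Fin (m+1) → V, (∏ i, w (x i)) * g x) ^ (Fintype.card τ) ≤
        ∑ x : τ → V, (∏ j, w (x j)) * ∑ y : Fin m → V, (∏ i, w (y i)) * ∏ j, g (Fin.cons (x j) y) := by
      rw [e1]
      refine (Real.pow_arith_mean_le_arith_mean_pow _ _ _ (fun y _ => hP y)
        (sum_weights_one w h1) (fun y _ => Finset.sum_nonneg fun v _ => mul_nonneg (h0 v) (hg _)) _).trans ?_
      apply le_of_eq
      simp_rw [Finset.mul_sum]
      rw [Finset.sum_comm]
      refine Finset.sum_congr rfl fun y _ => ?_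
      have := Fintype.prod_sum (fun (_ : τ) (v : V) => w v * g (Fin.cons v y))
      rw [Finset.prod_const, Finset.card_univ] at this
      rw [this, Finset.mul_sum]
      refine Finset.sum_congr rfl fun x _ => ?_
      rw [Finset.prod_mul_distrib]
      ring
    have hE : 0 ≤ ∑ x : Fin (m+1) → V, (∏ i, w (x i)) * g x := 
      Finset.sum_nonneg fun x _ => mul_nonneg (Finset.prod_nonneg fun i _ => h0 _) (hg _)
    rw [pow_succ', pow_mul]
    refine (pow_le_pow_left₀ (pow_nonneg hE _) s1 _).trans ?_
    refine (Real.pow_arith_mean_le_arith_mean_pow _ _ _ (fun y _ => hQ y)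
        (sum_weights_one w h1) (fun y _ => Finset.sum_nonneg fun v _ => mul_nonneg (hP v) 
          (Finset.prod_nonneg fun _ _ => hg _)) _).trans ?_
    rw [tsum_fcons]
    refine Finset.sum_le_sum fun x _ => ?_
    refine (mul_le_mul_of_nonneg_left (ih (fun y => ∏ j, g (Fin.cons (x j) y)) 
      (fun y => Finset.prod_nonneg fun _ _ => hg _)) (hQ x)).trans ?_
    apply le_of_eq
    rw [Finset.mul_sum]
    refine Finset.sum_congr rfl fun a _ => ?_
    have hc : ∏ c : Fin m → τ, ∏ j, g (Fin.cons (x j) (fun i => a i (c i))) =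
        ∏ c : Fin (m+1) → τ, g (fun i => (Fin.cons x a : Fin (m+1) → τ → V) i (c i)) := by
      rw [tprod_fcons, Finset.prod_comm]
      refine Finset.prod_congr rfl fun j _ => Finset.prod_congr rfl fun c _ => ?_
      congr 1
      ext i
      refine Fin.cases ?_ ?_ i <;> simp
    rw [Fin.prod_univ_succ, hc]
    simp only [Fin.cons_zero, Fin.cons_succ]
    rw [mul_assoc]

open Classical in
/-- pulled back graph -/
noncomputable def pullG {k : ℕ} (r : ℕ) {m : ℕ} (G : Finset (Finset (Fin k))) (φ : Fin m → Fin k) :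
    Finset (Finset (Fin m)) :=
  ((Finset.univ : Finset (Fin m)).powersetCard r).filter fun e => e.image φ ∈ G

theorem count_maps {k r : ℕ} {ε : Type*} [Fintype ε] [DecidableEq ε] (hε : Fintype.card ε = r)
    (g : Finset (Fin k)) (hg : g.card = r) :
    (Finset.univ.filter fun x : ε → Fin k => Finset.univ.image x = g).card = r.factorial := by
  have : Fintype.card (ε ≃ g) = r.factorial := by
    rw [Fintype.card_equiv (Fintype.equivOfCardEq (by simp [hε, hg])), hε]
  rw [← this, ← Finset.card_univ]
  symm
  refine Finset.card_bij (fun (σ : ε ≃ g) _ => fun i => (σ i : Fin k)) ?_ ?_ ?_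
  · intro σ _
    simp only [Finset.mem_filter, Finset.mem_univ, true_and]
    ext j
    simp only [Finset.mem_image, Finset.mem_univ, true_and]
    constructor
    · rintro ⟨i, rfl⟩; exact (σ i).2
    · intro hj; exact ⟨σ.symm ⟨j, hj⟩, by simp⟩
  · intro σ _ σ' _ h
    ext i
    exact congrArg Fin.val (congrFun h i)
  · intro x hx
    simp only [Finset.mem_filter, Finset.mem_univ, true_and] at hx
    have hm : ∀ i, x i ∈ g := fun i => hx ▸ Finset.mem_image_of_mem _ (Finset.mem_univ i)
    have hs : Function.Surjective (fun i => (⟨x i, hm i⟩ : g)) := by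
      rintro ⟨j, hj⟩
      have hj' := hj
      rw [← hx] at hj'
      obtain ⟨i, _, rfl⟩ := Finset.mem_image.1 hj'
      exact ⟨i, rfl⟩
    have hb := (Fintype.bijective_iff_surjective_and_card _).2 ⟨hs, by simp [hε, hg]⟩
    exact ⟨Equiv.ofBijective _ hb, Finset.mem_univ _, rfl⟩

theorem local_sum {k r : ℕ} {ε : Type*} [Fintype ε] [DecidableEq ε] (hε : Fintype.card ε = r)
    (G : Finset (Finset (Fin k))) (hG : IsRGraph r G) (w : Fin k → ℝ) :
    (∑ x : ε → Fin k, (∏ i, w (x i)) * (if Finset.univ.image x ∈ G then 1 else 0)) =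
      r.factorial * ∑ g ∈ G, ∏ i ∈ g, w i := by
  have h : ∀ x : ε → Fin k, (if Finset.univ.image x ∈ G then (1:ℝ) else 0) = 
      ∑ g ∈ G, if Finset.univ.image x = g then 1 else 0 := by
    intro x; simp
  simp_rw [h, Finset.mul_sum]
  rw [Finset.sum_comm]
  refine Finset.sum_congr rfl fun g hg => ?_
  rw [← count_maps hε g (hG g hg)]
  simp only [mul_ite, mul_one, mul_zero]
  rw [← Finset.sum_filter, ← nsmul_eq_mul]
  apply Finset.sum_eq_card_nsmul
  intro x hx
  simp only [Finset.mem_filter, Finset.mem_univ, true_and] at hx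
  have : Set.InjOn x (Finset.univ : Finset ε) := by
    apply Finset.card_image_iff.1
    rw [hx, hG g hg, Finset.card_univ, hε]
  rw [← hx, Finset.prod_image this]

theorem expect_pull {k r : ℕ} (m : ℕ) (G : Finset (Finset (Fin k))) (hG : IsRGraph r G)
    (w : Fin k → ℝ) (h1 : ∑ v, w v = 1) :
    ∑ φ : Fin m → Fin k, (∏ v, w (φ v)) * ((pullG r G φ).card : ℝ) =
      m.choose r * (r.factorial * ∑ g ∈ G, ∏ i ∈ g, w i) := by
  have h : ∀ φ : Fin m → Fin k, ((pullG r G φ).card : ℝ) = 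
      ∑ e ∈ (Finset.univ : Finset (Fin m)).powersetCard r, if e.image φ ∈ G then 1 else 0 := by
    intro φ
    rw [pullG, Finset.sum_boole]
  simp_rw [h]
  rw [Finset.sum_congr rfl fun φ _ => Finset.mul_sum _ _ _, Finset.sum_comm]
  have hc : m.choose r = ((Finset.univ : Finset (Fin m)).powersetCard r).card := by simp
  rw [hc, ← nsmul_eq_mul]
  apply Finset.sum_eq_card_nsmul
  intro e he
  have he := (Finset.mem_powersetCard.1 he).2
  rw [← local_sum (ε := {i // i ∈ e}) (by simp [he]) G hG w]
  rw [← (Equiv.piEquivPiSubtypeProd (fun i => i ∈ e) (fun _ => Fin k)).symm.sum_comp,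
    Fintype.sum_prod_type]
  refine Finset.sum_congr rfl fun x _ => ?_
  have key : ∀ y : {i // i ∉ e} → Fin k, 
      (∏ v, w ((Equiv.piEquivPiSubtypeProd (fun i => i ∈ e) (fun _ => Fin k)).symm (x, y) v)) *
      (if e.image ((Equiv.piEquivPiSubtypeProd (fun i => i ∈ e) (fun _ => Fin k)).symm (x, y)) ∈ G
        then (1:ℝ) else 0) = (∏ i, w (y i)) * 
        ((∏ i, w (x i)) * (if Finset.univ.image x ∈ G then 1 else 0)) := by
    intro y
    have a1 : e.image ((Equiv.piEquivPiSubtypeProd (fun i => i ∈ e) (fun _ => Fin k)).symm (x, y)) = 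
        Finset.univ.image x := by
      ext j
      simp only [Finset.mem_image, Finset.mem_univ, true_and]
      constructor
      · rintro ⟨i, hi, rfl⟩
        exact ⟨⟨i, hi⟩, by simp [hi]⟩
      · rintro ⟨i, rfl⟩
        exact ⟨i, i.2, by simp⟩
    rw [a1, ← Fintype.prod_subtype_mul_prod_subtype (fun i => i ∈ e)]
    have a2 : ∀ i : {i // i ∈ e}, 
      (Equiv.piEquivPiSubtypeProd (fun i => i ∈ e) (fun _ => Fin k)).symm (x, y) i = x i := by
      intro i; simp
    have a3 : ∀ i : {i // i ∉ e}, 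
      (Equiv.piEquivPiSubtypeProd (fun i => i ∈ e) (fun _ => Fin k)).symm (x, y) i = y i := by
      intro i; simp [i.2]
    simp_rw [a2, a3]
    by_cases hx : Finset.univ.image x ∈ G
    · simp only [hx, if_true, mul_one]
      rw [mul_comm]
      congr!
    · simp only [hx, if_false, mul_zero]
  rw [Finset.sum_congr rfl fun y _ => key y, ← Finset.sum_mul, sum_weights_one w h1, one_mul]

theorem pull_hom {α : Type*} {k r m : ℕ} (F : Finset (Finset α)) (G : Finset (Finset (Fin k)))
    (φ : Fin m → Fin k) (h : ContainsHom F (pullG r G φ)) : ContainsHom F G := by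
  obtain ⟨f, hf⟩ := h
  refine ⟨φ ∘ f, fun e he => ?_⟩
  have := hf e he
  rw [pullG, Finset.mem_filter, Finset.image_image] at this
  exact this.2

theorem pull_rgraph {k r m : ℕ} (G : Finset (Finset (Fin k))) (φ : Fin m → Fin k) :
    IsRGraph r (pullG r G φ) := by
  intro e he
  rw [pullG, Finset.mem_filter, Finset.mem_powersetCard] at he
  exact he.1.2

theorem rgraph_card {r m : ℕ} (G : Finset (Finset (Fin m))) (hG : IsRGraph r G) :
    G.card ≤ m.choose r := by
  have : G ⊆ (Finset.univ : Finset (Fin m)).powersetCard r := fun e he =>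
    Finset.mem_powersetCard.2 ⟨Finset.subset_univ _, hG e he⟩
  simpa using Finset.card_le_card this

theorem exists_pull {k r : ℕ} (m : ℕ) (G : Finset (Finset (Fin k))) (hG : IsRGraph r G)
    (w : Fin k → ℝ) (h0 : ∀ v, 0 ≤ w v) (h1 : ∑ v, w v = 1) :
    ∃ φ : Fin m → Fin k, m.choose r * (r.factorial * ∑ g ∈ G, ∏ i ∈ g, w i) ≤
      ((pullG r G φ).card : ℝ) := by
  by_contra! hcon
  have hs := sum_weights_one (ι := Fin m) w h1
  have hne : (Finset.univ : Finset (Fin m → Fin k)).Nonempty := by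
    by_contra hn
    rw [Finset.not_nonempty_iff_eq_empty] at hn
    rw [hn] at hs
    simp at hs
  obtain ⟨φ, _, hφ⟩ := Finset.exists_max_image Finset.univ
    (fun φ : Fin m → Fin k => ((pullG r G φ).card : ℝ)) hne
  have h2 := expect_pull m G hG w h1
  have h3 : ∑ φ : Fin m → Fin k, (∏ v, w (φ v)) * ((pullG r G φ).card : ℝ) ≤
      ∑ ψ : Fin m → Fin k, (∏ v, w (ψ v)) * ((pullG r G φ).card : ℝ) :=
    Finset.sum_le_sum fun ψ _ => mul_le_mul_of_nonneg_left (hφ ψ (Finset.mem_univ _))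
      (Finset.prod_nonneg fun i _ => h0 _)
  rw [← Finset.sum_mul, hs, one_mul, h2] at h3
  exact absurd (hcon φ) (not_lt.2 h3)

theorem poly_le {k r : ℕ} (G : Finset (Finset (Fin k))) (hG : IsRGraph r G)
    (w : Fin k → ℝ) (h0 : ∀ v, 0 ≤ w v) (h1 : ∑ v, w v = 1) :
    r.factorial * ∑ g ∈ G, ∏ i ∈ g, w i ≤ 1 := by
  obtain ⟨φ, hφ⟩ := exists_pull r G hG w h0 h1
  have h2 := rgraph_card _ (pull_rgraph (r := r) G φ)
  rw [Nat.choose_self] at h2 hφ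
  rw [Nat.cast_one, one_mul] at hφ
  have h3 : ((pullG r G φ).card : ℝ) ≤ 1 := by exact_mod_cast h2
  linarith

theorem poly_le_lagrangian {k r : ℕ} (G : Finset (Finset (Fin k))) (hG : IsRGraph r G)
    (w : Fin k → ℝ) (h0 : ∀ v, 0 ≤ w v) (h1 : ∑ v, w v = 1) :
    ∑ g ∈ G, ∏ i ∈ g, w i ≤ lagrangian G := by
  apply le_csSup
  · refine ⟨1 / r.factorial, ?_⟩
    rintro x ⟨w, h0, h1, rfl⟩
    rw [le_div_iff₀ (by positivity), mul_comm]
    exact poly_le G hG w h0 h1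
  · exact ⟨w, h0, h1, rfl⟩

theorem lagrangian_le {k r : ℕ} (G : Finset (Finset (Fin k))) (X : ℝ) (hX : 0 ≤ X)
    (h : ∀ w : Fin k → ℝ, (∀ v, 0 ≤ w v) → ∑ v, w v = 1 → 
      r.factorial * ∑ g ∈ G, ∏ i ∈ g, w i ≤ X) :
    r.factorial * lagrangian G ≤ X := by
  rw [mul_comm, ← le_div_iff₀ (by positivity)]
  apply Real.sSup_le
  · rintro x ⟨w, h0, h1, rfl⟩
    rw [le_div_iff₀ (by positivity), mul_comm]
    exact h w h0 h1
  · positivity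

theorem le_exNum {α : Type*} {r n : ℕ} (F : Finset (Finset α)) (G : Finset (Finset (Fin n)))
    (hG : IsRGraph r G) (hc : ¬ ContainsCopy F G) : G.card ≤ exNum r n F := by
  apply le_csSup
  · refine ⟨n.choose r, ?_⟩
    rintro x ⟨G, hG, _, rfl⟩
    exact rgraph_card G hG
  · exact ⟨G, hG, hc, rfl⟩

theorem exNum_le {α : Type*} {r n : ℕ} (F : Finset (Finset α)) (X : ℝ) (hX : 0 ≤ X)
    (h : ∀ G : Finset (Finset (Fin n)), IsRGraph r G → ¬ ContainsCopy F G → (G.card : ℝ) ≤ X) :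
    (exNum r n F : ℝ) ≤ X := by
  refine le_trans ?_ (Nat.floor_le hX)
  norm_cast
  apply csSup_le'
  rintro x ⟨G, hG, hc, rfl⟩
  exact Nat.le_floor (h G hG hc)

theorem lower_bound {α : Type*} {r n : ℕ} (F : Finset (Finset α)) (hn : r ≤ n) :
    sSup {x : ℝ | ∃ (k : ℕ) (G : Finset (Finset (Fin k))),
        IsRGraph r G ∧ ¬ ContainsHom F G ∧ x = (r.factorial : ℝ) * lagrangian G} ≤
      (exNum r n F : ℝ) / (n.choose r) := by
  have hp : (0:ℝ) < n.choose r := by exact_mod_cast Nat.choose_pos hn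
  apply Real.sSup_le _ (by positivity)
  rintro x ⟨k, G, hG, hh, rfl⟩
  apply lagrangian_le _ _ (by positivity)
  intro w h0 h1
  obtain ⟨φ, hφ⟩ := exists_pull n G hG w h0 h1
  rw [le_div_iff₀ hp, mul_comm]
  refine hφ.trans ?_
  norm_cast
  apply le_exNum F _ (pull_rgraph G φ)
  rintro ⟨f, _, hf⟩
  exact hh (pull_hom F G φ ⟨f, hf⟩)

theorem tendsto_desc (r : ℕ) :
    Filter.Tendsto (fun n : ℕ => (n.descFactorial r : ℝ) / (n:ℝ)^r) Filter.atTop (nhds 1) := by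
  have h := isEquivalent_descFactorial r
  rw [Asymptotics.isEquivalent_iff_tendsto_one] at h
  · exact h
  · filter_upwards [Filter.eventually_gt_atTop 0] with n hn
    positivity

theorem desc_choose (r n : ℕ) : (n.descFactorial r : ℝ) = r.factorial * n.choose r := by
  rw [Nat.descFactorial_eq_factorial_mul_choose]; push_cast; ring

theorem unif_sum {n : ℕ} (hn : 0 < n) : ∑ _v : Fin n, ((n:ℝ)⁻¹) = 1 := by
  have : (n:ℝ) ≠ 0 := by positivity
  simp [this]

theorem unif_poly {n r : ℕ} (G : Finset (Finset (Fin n))) (hG : IsRGraph r G) :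
    ∑ g ∈ G, ∏ _i ∈ g, ((n:ℝ)⁻¹) = G.card * ((n:ℝ)⁻¹)^r := by
  rw [← nsmul_eq_mul]
  apply Finset.sum_eq_card_nsmul
  intro g hg
  rw [Finset.prod_const, hG g hg]

open Classical in
/-- finding an injective copy -/
theorem find_copy {α : Type*} [Fintype α] {r n m : ℕ} (F : Finset (Finset α))
    (hF : IsRGraph r F) (G : Finset (Finset (Fin n))) (hG : IsRGraph r G) (f : α → Fin m)
    (hex : ∃ ψ : Fin m → Fin n, ∀ e ∈ F, e.image (fun v => ψ (f v)) ∈ G)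
    (a : Fin m → α → Fin n) (ha : Function.Injective (fun p : Fin m × α => a p.1 p.2))
    (h : ∀ c : Fin m → α, ∀ e ∈ F, e.image (fun v => a (f v) (c (f v))) ∈ G) :
    ContainsCopy F G := by
  refine ⟨fun v => a (f v) v, ?_, ?_⟩
  · intro u v huv
    have := @ha (f u, u) (f v, v) huv
    exact (Prod.ext_iff.1 this).2
  · intro e he
    by_cases hα : Nonempty α
    · obtain ⟨v0⟩ := hα
      have h1 := h (fun _ => v0) e he
      have hi : Set.InjOn (fun v => a (f v) v0) e := by
        apply Finset.card_image_iff.1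
        rw [hG _ h1, hF e he]
      let c : Fin m → α := fun i => if hh : ∃ v ∈ e, f v = i then hh.choose else v0
      have hc : ∀ v ∈ e, c (f v) = v := by
        intro v hv
        have hh : ∃ u ∈ e, f u = f v := ⟨v, hv, rfl⟩
        have : c (f v) = hh.choose := dif_pos hh
        rw [this]
        apply hi hh.choose_spec.1 hv
        simp only [hh.choose_spec.2]
      have h2 := h c e he
      have : e.image (fun v => a (f v) (c (f v))) = e.image (fun v => a (f v) v) := by
        apply Finset.image_congr
        intro v hv
        simp only [hc v hv]
      rwa [this] at h2
    · have : e = ∅ := by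
        ext v; exact (hα ⟨v⟩).elim
      subst this
      obtain ⟨ψ, hψ⟩ := hex
      simpa using hψ ∅ he

open Classical in
theorem card_inj {α : Type*} [Fintype α] (m n : ℕ) : 
    (Finset.univ.filter fun a : Fin m → α → Fin n => 
      Function.Injective (fun p : Fin m × α => a p.1 p.2)).card = 
      n.descFactorial (Fintype.card (Fin m × α)) := by
  have := Fintype.card_embedding_eq (α := Fin m × α) (β := Fin n)
  rw [Fintype.card_fin n] at this
  rw [← this, ← Finset.card_univ]
  symm
  refine Finset.card_bij (fun (t : (Fin m × α) ↪ Fin n) _ => fun i j => t (i, j)) ?_ ?_ ?_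
  · intro t _
    simpa using t.injective
  · intro t _ t' _ h
    ext ⟨i, j⟩
    exact congrArg Fin.val (congrFun (congrFun h i) j)
  · intro a ha
    exact ⟨⟨_, (Finset.mem_filter.1 ha).2⟩, Finset.mem_univ _, rfl⟩

set_option maxHeartbeats 2000000 in
open Classical in
theorem upper_bound {α : Type*} [Fintype α] {r : ℕ} (F : Finset (Finset α))
    (hF : IsRGraph r F) (s : ℝ) (hs0 : 0 ≤ s)
    (hs : ∀ (k : ℕ) (G : Finset (Finset (Fin k))), IsRGraph r G → ¬ ContainsHom F G →
      (r.factorial : ℝ) * lagrangian G ≤ s) (ε : ℝ) (hε : 0 < ε) :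
    ∀ᶠ n : ℕ in Filter.atTop, ∀ G : Finset (Finset (Fin n)), IsRGraph r G →
      ¬ ContainsCopy F G → (G.card : ℝ) ≤ (s + ε) * n.choose r := by
  obtain ⟨m, hm1, hmr, hm⟩ : ∃ m : ℕ, 0 < m ∧ r ≤ m ∧
      s < (s + ε / 4) * ((m.descFactorial r : ℝ) / (m:ℝ)^r) := by
    have h := (tendsto_desc r).const_mul (s + ε / 4)
    have h2 := h.eventually (lt_mem_nhds (show s < (s + ε/4) * 1 by linarith))
    exact ((Filter.eventually_gt_atTop 0).and ((Filter.eventually_ge_atTop r).and h2)).exists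
  have hm0 : (0:ℝ) < m := by exact_mod_cast hm1
  have hC : (0:ℝ) < m.choose r := by exact_mod_cast Nat.choose_pos hmr
  have hfree : ∀ H : Finset (Finset (Fin m)), IsRGraph r H → ¬ ContainsHom F H →
      (H.card : ℝ) ≤ (s + ε / 4) * m.choose r := by
    intro H hH hh
    have h1 := poly_le_lagrangian H hH (fun _ => (m:ℝ)⁻¹) (fun _ => by positivity) (unif_sum hm1)
    rw [unif_poly H hH] at h1
    have h2 := hs m H hH hh
    have hr : (0:ℝ) < r.factorial := by positivity
    have h3 : r.factorial * (H.card * ((m:ℝ)⁻¹)^r) ≤ s :=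
      (mul_le_mul_of_nonneg_left h1 hr.le).trans h2
    rw [desc_choose] at hm
    have h4 := (h3.trans hm.le)
    rw [inv_pow, ← div_eq_mul_inv, ← mul_div_assoc, ← mul_div_assoc,
      div_le_div_iff_of_pos_right (by positivity)] at h4
    have h5 : (r.factorial : ℝ) * H.card ≤ r.factorial * ((s + ε/4) * m.choose r) := by linarith
    exact le_of_mul_le_mul_left h5 hr
  set K := Fintype.card (Fin m × α) with hK
  set N := Fintype.card (α → Fin m) with hN
  have hNpos : (0:ℝ) < N := by
    have : Nonempty (α → Fin m) := ⟨fun _ => ⟨0, hm1⟩⟩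
    exact_mod_cast Fintype.card_pos
  set δ := ε / 4 / N with hδ
  have hδ0 : 0 < δ := by positivity
  set δ' := δ ^ (Fintype.card α ^ m) with hδ'
  have hδ'0 : 0 < δ' := by positivity
  have hn1 := ((tendsto_desc r).const_mul (s + ε)).eventually
    (lt_mem_nhds (show s + ε / 2 < (s + ε) * 1 by linarith))
  have hn2 := (tendsto_desc K).eventually (lt_mem_nhds (show 1 - δ' < 1 by linarith))
  filter_upwards [hn1, hn2, Filter.eventually_gt_atTop 0] with n hn1 hn2 hnpos G hG hcopy
  by_contra! hbig
  have hn0 : (0:ℝ) < n := by exact_mod_cast hnpos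
  apply hcopy
  have hexp := expect_pull m G hG (fun _ => (n:ℝ)⁻¹) (unif_sum hnpos)
  rw [unif_poly G hG] at hexp
  have hden : s + ε / 2 ≤ r.factorial * (G.card * ((n:ℝ)⁻¹)^r) := by
    refine hn1.le.trans ?_
    rw [desc_choose, inv_pow, ← div_eq_mul_inv, ← mul_div_assoc, ← mul_div_assoc,
      div_le_div_iff_of_pos_right (by positivity)]
    have hr : (0:ℝ) < r.factorial := by positivity
    nlinarith [mul_le_mul_of_nonneg_left hbig.le hr.le]
  have hunit := sum_weights_one (ι := Fin m) (fun _ : Fin n => (n:ℝ)⁻¹) (unif_sum hnpos)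
  -- indicator
  let g : (α → Fin m) → (Fin m → Fin n) → ℝ := fun f ψ =>
    if ∀ e ∈ F, e.image (fun v => ψ (f v)) ∈ G then 1 else 0
  have hg0 : ∀ f ψ, 0 ≤ g f ψ := by
    intro f ψ; simp only [g]; split_ifs <;> norm_num
  have hpt : ∀ ψ : Fin m → Fin n, ((pullG r G ψ).card : ℝ) ≤
      (s + ε / 4) * m.choose r + m.choose r * ∑ f, g f ψ := by
    intro ψ
    by_cases hh : ContainsHom F (pullG r G ψ)
    · obtain ⟨f, hf⟩ := hh
      have h1 : (1:ℝ) ≤ ∑ f, g f ψ := by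
        have : g f ψ = 1 := by
          apply if_pos
          intro e he
          have := hf e he
          rw [pullG, Finset.mem_filter, Finset.image_image] at this
          exact this.2
        rw [← this]
        exact Finset.single_le_sum (f := fun f => g f ψ) (fun f _ => hg0 f ψ) (Finset.mem_univ f)
      have h2 : ((pullG r G ψ).card : ℝ) ≤ m.choose r := by
        exact_mod_cast rgraph_card _ (pull_rgraph (r := r) G ψ)
      have h3 := mul_le_mul_of_nonneg_left h1 hC.le
      have h4 : 0 ≤ (s + ε/4) * m.choose r := by positivity
      linarith
    · have h1 := hfree _ (pull_rgraph G ψ) hh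
      have h2 : 0 ≤ (m.choose r : ℝ) * ∑ f, g f ψ := 
        mul_nonneg hC.le (Finset.sum_nonneg fun f _ => hg0 f ψ)
      linarith
  have hsum : ε / 4 ≤ ∑ f : α → Fin m, ∑ ψ : Fin m → Fin n, (∏ _v : Fin m, (n:ℝ)⁻¹) * g f ψ := by
    have h1 : ∑ ψ : Fin m → Fin n, (∏ _v : Fin m, (n:ℝ)⁻¹) * ((pullG r G ψ).card : ℝ) ≤
        ∑ ψ : Fin m → Fin n, ((∏ _v : Fin m, (n:ℝ)⁻¹) * ((s + ε / 4) * m.choose r) + 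
          m.choose r * ∑ f, (∏ _v : Fin m, (n:ℝ)⁻¹) * g f ψ) := by
      refine Finset.sum_le_sum fun ψ _ => ?_
      rw [← Finset.mul_sum]
      have : (0:ℝ) ≤ ∏ _v : Fin m, (n:ℝ)⁻¹ := by positivity
      have := mul_le_mul_of_nonneg_left (hpt ψ) this
      linarith
    rw [hexp, Finset.sum_add_distrib, ← Finset.sum_mul, hunit, ← Finset.mul_sum,
      Finset.sum_comm] at h1
    have h2 := mul_le_mul_of_nonneg_left hden hC.le
    have h3 : (m.choose r : ℝ) * (ε/4) ≤ m.choose r * 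
      ∑ f : α → Fin m, ∑ ψ : Fin m → Fin n, (∏ _v : Fin m, (n:ℝ)⁻¹) * g f ψ := by linarith
    exact le_of_mul_le_mul_left h3 hC
  obtain ⟨f, hf⟩ : ∃ f : α → Fin m, δ ≤ ∑ ψ : Fin m → Fin n, (∏ _v : Fin m, (n:ℝ)⁻¹) * g f ψ := by
    by_contra! hcon
    have hne : (Finset.univ : Finset (α → Fin m)).Nonempty := ⟨fun _ => ⟨0, hm1⟩, Finset.mem_univ _⟩
    have := Finset.sum_lt_sum_of_nonempty hne (fun f _ => hcon f)
    rw [Finset.sum_const, Finset.card_univ, nsmul_eq_mul, ← hN, hδ] at this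
    rw [mul_div_cancel₀ _ hNpos.ne'] at this
    linarith
  have hblow := blow_up (τ := α) (fun _ : Fin n => (n:ℝ)⁻¹) (fun _ => by positivity)
    (unif_sum hnpos) m (g f) (hg0 f)
  have hblow2 := (pow_le_pow_left₀ hδ0.le hf (Fintype.card α ^ m)).trans hblow
  by_contra hno
  have hex : ∃ ψ : Fin m → Fin n, ∀ e ∈ F, e.image (fun v => ψ (f v)) ∈ G := by
    by_contra! hcon
    have : ∑ ψ : Fin m → Fin n, (∏ _v : Fin m, (n:ℝ)⁻¹) * g f ψ = 0 := by
      refine Finset.sum_eq_zero fun ψ _ => ?_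
      have : g f ψ = 0 := if_neg (by push Not; exact hcon ψ)
      rw [this, mul_zero]
    linarith
  have hle : ∀ a : Fin m → α → Fin n, ∏ c : Fin m → α, g f (fun i => a i (c i)) ≤
      1 - (if Function.Injective (fun p : Fin m × α => a p.1 p.2) then 1 else 0) := by
    intro a
    split_ifs with hi
    · have : ∃ c : Fin m → α, ¬ ∀ e ∈ F, e.image (fun v => a (f v) (c (f v))) ∈ G := by
        by_contra! hc
        exact hno (find_copy F hF G hG f hex a hi hc)
      obtain ⟨c, hc⟩ := this
      rw [Finset.prod_eq_zero (Finset.mem_univ c) (if_neg hc)]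
      norm_num
    · rw [sub_zero]
      apply Finset.prod_le_one (fun c _ => hg0 f (fun i => a i (c i)))
      intro c _
      simp only [g]; split_ifs <;> norm_num
  have hcardinj := card_inj (α := α) m n
  rw [← hK] at hcardinj
  have hfin : ∑ a : Fin m → α → Fin n, (∏ _i : Fin m, ∏ _j : α, (n:ℝ)⁻¹) *
        ∏ c : Fin m → α, g f (fun i => a i (c i)) ≤ 1 - (n.descFactorial K : ℝ) / (n:ℝ)^K := by
    have e1 : (∏ _i : Fin m, ∏ _j : α, (n:ℝ)⁻¹) = ((n:ℝ)^K)⁻¹ := by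
      simp only [Finset.prod_const, Finset.card_univ, Fintype.card_fin]
      rw [← pow_mul, inv_pow, hK, Fintype.card_prod, Fintype.card_fin, mul_comm]
    rw [e1, ← Finset.mul_sum]
    refine (mul_le_mul_of_nonneg_left (Finset.sum_le_sum fun a _ => hle a) (by positivity)).trans ?_
    rw [Finset.sum_sub_distrib, Finset.sum_boole, hcardinj]
    have e2 : ∑ _a : Fin m → α → Fin n, (1:ℝ) = (n:ℝ)^K := by
      simp only [Finset.sum_const, Finset.card_univ, nsmul_eq_mul, mul_one]
      rw [Fintype.card_fun, Fintype.card_fun, hK, Fintype.card_prod]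
      simp only [Fintype.card_fin]
      push_cast
      rw [← pow_mul, mul_comm]
    rw [e2]
    apply le_of_eq
    field_simp
  linarith
/-- **Lemma (Sidorenko).**  For any `r`-graph `F`, the sequence `ex(n,F)/C(n,r)` converges,
and its limit (the Turán density `π(F)`) equals
`sup { r!·λ(G) : G an F-hom-free r-graph }`. -/
theorem turan_density_eq_sup_lagrangian {α : Type*} [Fintype α]
    (r : ℕ) (F : Finset (Finset α)) (hF : IsRGraph r F) :
    Filter.Tendsto (fun n => (exNum r n F : ℝ) / (n.choose r)) Filter.atTop
      (nhds (sSup {x : ℝ | ∃ (k : ℕ) (G : Finset (Finset (Fin k))),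
        IsRGraph r G ∧ ¬ ContainsHom F G ∧ x = (r.factorial : ℝ) * lagrangian G})) := by
  set S := {x : ℝ | ∃ (k : ℕ) (G : Finset (Finset (Fin k))),
        IsRGraph r G ∧ ¬ ContainsHom F G ∧ x = (r.factorial : ℝ) * lagrangian G} with hS
  have hbdd : BddAbove S := by
    refine ⟨1, ?_⟩
    rintro x ⟨k, G, hG, _, rfl⟩
    exact lagrangian_le G 1 zero_le_one (fun w h0 h1 => poly_le G hG w h0 h1)
  have hs0 : 0 ≤ sSup S := by
    apply Real.sSup_nonneg
    rintro x ⟨k, G, hG, _, rfl⟩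
    refine mul_nonneg (by positivity) (Real.sSup_nonneg ?_)
    rintro y ⟨w, h0, _, rfl⟩
    exact Finset.sum_nonneg fun e _ => Finset.prod_nonneg fun i _ => h0 i
  rw [Metric.tendsto_nhds]
  intro ε hε
  filter_upwards [upper_bound F hF (sSup S) hs0
    (fun k G hG hh => le_csSup hbdd ⟨k, G, hG, hh, rfl⟩) (ε / 2) (half_pos hε),
    Filter.eventually_ge_atTop r] with n hn hnr
  have h1 := lower_bound (n := n) F hnr
  have hp : (0:ℝ) < n.choose r := by exact_mod_cast Nat.choose_pos hnr
  have h2 : (exNum r n F : ℝ) / n.choose r ≤ sSup S + ε / 2 := by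
    rw [div_le_iff₀ hp]
    exact exNum_le F _ (by positivity) hn
  rw [← hS] at h1
  rw [Real.dist_eq, abs_lt]
  constructor <;> linarith
end

section
/- Let ℓ > r ≥ 2 be integers and let F be a 2-graph with χ(F) = ℓ. If G is an r-graph on at least ℓ vertices that covers pairs (every pair of vertices of G lies in a common edge), then there exists a homomorphism from H_F^(r) to G. -/
open Finset

/-- **Lemma.**  Let `ℓ > r ≥ 2` and let `F` be a 2-graph with `χ(F) = ℓ`.  If `G` is an
`r`-graph on at least `ℓ` vertices that covers pairs, then there is a homomorphism from
`H_F^(r)` to `G`. -/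
theorem covers_pairs_contains_expansion_hom {α β : Type*}
    [Fintype α] [DecidableEq α] [Fintype β] [DecidableEq β]
    (r ℓ : ℕ) (hr : 2 ≤ r) (hrl : r < ℓ)
    (F : SimpleGraph α) [DecidableRel F.Adj] (hχ : F.chromaticNumber = (ℓ : ℕ∞))
    (G : Finset (Finset β)) (hG : IsRGraph r G) (hcard : ℓ ≤ Fintype.card β)
    (hcover : ∀ u v : β, u ≠ v → ∃ e ∈ G, u ∈ e ∧ v ∈ e) :
    ContainsHom (expansion r F) G := by
  have hcol : F.Colorable ℓ := SimpleGraph.chromaticNumber_le_iff_colorable.1 hχ.le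
  obtain ⟨c⟩ := hcol
  obtain ⟨emb⟩ : Nonempty (Fin ℓ ↪ β) :=
    Function.Embedding.nonempty_of_card_le (by simpa using hcard)
  have key : ∀ e : F.edgeFinset, ∃ p : Fin (r - 2) → β,
      (sym2ToFinset e.1).image (fun a => emb (c a)) ∪ (Finset.univ).image p ∈ G := by
    rintro ⟨e, he⟩
    induction e using Sym2.ind with
    | _ u v =>
    have hadj : F.Adj u v := by simpa using he
    have hne : emb (c u) ≠ emb (c v) := fun h => c.valid hadj (emb.injective h)
    obtain ⟨g, hg, hu, hv⟩ := hcover _ _ hne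
    have hs : (sym2ToFinset s(u, v)).image (fun a => emb (c a))
        = {emb (c u), emb (c v)} := by
      have : sym2ToFinset s(u, v) = {u, v} := by
        ext x
        simp [sym2ToFinset]
      rw [this, Finset.image_insert, Finset.image_singleton]
    have hsub : ({emb (c u), emb (c v)} : Finset β) ⊆ g := by
      intro x hx
      simp only [Finset.mem_insert, Finset.mem_singleton] at hx
      rcases hx with rfl | rfl <;> assumption
    have hc : (g \ {emb (c u), emb (c v)}).card = r - 2 := by
      rw [Finset.card_sdiff_of_subset hsub, hG g hg, Finset.card_pair hne]
    let q := (g \ {emb (c u), emb (c v)}).equivFinOfCardEq hc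
    refine ⟨fun i => (q.symm i : β), ?_⟩
    have hi : (Finset.univ).image (fun i => (q.symm i : β))
        = g \ {emb (c u), emb (c v)} := by
      ext x
      simp only [Finset.mem_image, Finset.mem_univ, true_and]
      constructor
      · rintro ⟨i, rfl⟩
        exact (q.symm i).2
      · intro hx
        exact ⟨q ⟨x, hx⟩, by simp⟩
    simp only [hs, hi]
    rw [Finset.union_sdiff_of_subset hsub]
    exact hg
  choose p hp using key
  refine ⟨Sum.elim (fun a => emb (c a)) (fun x => p x.1 x.2), ?_⟩
  intro e he
  obtain ⟨d, -, rfl⟩ := Finset.mem_image.1 he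
  have := hp d
  rw [Finset.image_union, Finset.image_image, Finset.image_image]
  exact this
end
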